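/- arXiv:2104.13890 — 3 statements merged into one kernel-verified Lean document; each statement's English description precedes it below -/
import Mathlib

section
/- Let G = ℤⁿ act on a compact metrizable space X with continuous 1-cocycle Ω : G × X → ℝ. If there exists an ergodic G-invariant probability measure μ on X such that ∫_X Ω(g,x) dμ(x) = 0 for all g ∈ G, then for every β ∈ ℝ there exists an e^{β·Ω}-conformal probability measure on X (i.e., the KMS spectrum equals ℝ). -/
open MeasureTheory

/-- A Borel probability measure `m` is `e^{β·Ω}`-conformal for an additive action. -/
def ConformalMeasureAdd {G X : Type*} [AddGroup G] [TopologicalSpace X] [MeasurableSpace X]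
    [AddAction G X] (Ω : G → X → ℝ) (β : ℝ) (m : Measure X) : Prop :=
  ∀ g : G, ∀ f : C(X, ℝ),
    ∫ x, f (g +ᵥ x) * Real.exp (β * Ω g x) ∂m = ∫ x, f x ∂m

/-!
By the cocycle identity, `Ω (s • u)` is the Birkhoff sum of `Ω u` along the action of `u`, so by
von Neumann's mean ergodic theorem `Ω (s • u) / s` converges in `L²(μ)`. The increments
`Ω (s • u) (g +ᵥ x) - Ω (s • u) x` are bounded uniformly in `s`, hence the limit is an invariant
function; as `μ` is ergodic and all means vanish, it is zero. A second moment estimate and the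
cocycle identity then give, for every `δ > 0` and infinitely many `k`, a point `x` at which `|Ω|`
is at most `δ k` on the whole cube of radius `k`. So the partition functions of cubes at suitable
points grow subexponentially along a subsequence, and for some smaller cube enlarging it by a
fixed number of steps barely changes the partition function. The orbit of `x` over that cube,
weighted by `e^{β·Ω}`, is then an almost conformal probability measure, and any limit point of
such measures is conformal.
-/

open Filter Topology

/-! ### Ergodic actions and Koopman operators -/

section Ergodic

theorem ergodicVAdd_of_forall_preimage_eq {G α : Type*} [AddGroup G] [Countable G]
    [AddAction G α] [MeasurableSpace α] [MeasurableConstVAdd G α] {μ : Measure α}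
    [VAddInvariantMeasure G α μ]
    (h : ∀ s : Set α, MeasurableSet s → (∀ g : G, (g +ᵥ ·) ⁻¹' s = s) →
      EventuallyConst s (ae μ)) :
    ErgodicVAdd G α μ where
  aeconst_of_forall_preimage_vadd_ae_eq {s} hs hinv := by
    have hts : (⋂ g : G, (g +ᵥ ·) ⁻¹' s : Set α) =ᵐ[μ] s := by
      simpa only [Set.iInter_const] using Filter.EventuallyEq.countable_iInter hinv
    refine (h _ (.iInter fun g => hs.preimage (measurable_const_vadd g)) fun g => ?_).congr hts
    ext x
    simp only [Set.mem_preimage, Set.mem_iInter, vadd_vadd]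
    exact (Equiv.addRight g).forall_congr_right (q := fun k => k +ᵥ x ∈ s)

theorem exists_ae_eq_const_of_forall_vadd_ae_eq (G : Type*) {α β : Type*} [VAdd G α]
    [MeasurableSpace α] {μ : Measure α} [ErgodicVAdd G α μ] [Nonempty β] [MeasurableSpace β]
    [MeasurableSpace.CountablySeparated β] {f : α → β} (hf : NullMeasurable f μ)
    (hinv : ∀ g : G, f ∘ (g +ᵥ ·) =ᵐ[μ] f) : ∃ c, f =ᵐ[μ] Function.const α c :=
  exists_eventuallyEq_const_of_forall_separating MeasurableSet fun U hU =>
    eventuallyConst_set.1 <|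
      aeconst_of_forall_preimage_vadd_ae_eq G (hf hU) fun g => (hinv g).preimage U

/-- The Koopman operator `f ↦ f ∘ (g +ᵥ ·)` of a measure-preserving action on `Lᵖ(μ)`. -/
noncomputable def koopman {G α : Type*} [AddGroup G] [AddAction G α] [MeasurableSpace α]
    [MeasurableConstVAdd G α] (p : ENNReal) [Fact (1 ≤ p)] (μ : Measure α)
    [VAddInvariantMeasure G α μ] (g : G) : Lp ℝ p μ →ₗᵢ[ℝ] Lp ℝ p μ :=
  Lp.compMeasurePreservingₗᵢ ℝ (g +ᵥ ·) (measurePreserving_vadd g μ)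

theorem koopman_toLp {G X : Type*} [AddGroup G] [AddAction G X] [TopologicalSpace X]
    [CompactSpace X] [MeasurableSpace X] [BorelSpace X] [ContinuousConstVAdd G X] {p : ENNReal}
    [Fact (1 ≤ p)] {μ : Measure X} [IsFiniteMeasure μ] [VAddInvariantMeasure G X μ] (g : G)
    (f : C(X, ℝ)) : koopman p μ g (ContinuousMap.toLp p μ ℝ f) =
      ContinuousMap.toLp p μ ℝ (f.comp ⟨(g +ᵥ ·), continuous_const_vadd g⟩) :=
  rfl

theorem eq_zero_of_koopman_eq_of_integral_eq_zero (G : Type*) {α : Type*} [AddGroup G]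
    [AddAction G α] [MeasurableSpace α] [MeasurableConstVAdd G α] {μ : Measure α}
    [IsProbabilityMeasure μ] [ErgodicVAdd G α μ] {p : ENNReal} [Fact (1 ≤ p)] {v : Lp ℝ p μ}
    (hinv : ∀ g : G, koopman p μ g v = v) (hint : ∫ x, v x ∂μ = 0) : v = 0 := by
  have hcomp (g : G) : v ∘ (g +ᵥ ·) =ᵐ[μ] v :=
    (Lp.coeFn_compMeasurePreserving v (measurePreserving_vadd g μ)).symm.trans
      (Lp.ext_iff.1 (hinv g))
  obtain ⟨c, hc⟩ := exists_ae_eq_const_of_forall_vadd_ae_eq G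
    (Lp.aestronglyMeasurable v).aemeasurable.nullMeasurable hcomp
  obtain rfl : c = 0 := by simpa [integral_congr_ae hc] using hint
  exact (Lp.eq_zero_iff_ae_eq_zero).2 hc

end Ergodic

/-! ### Cubes in `ℤⁿ` and growth estimates -/

section AddGroupSeminorm

variable {G : Type*} [AddCommGroup G] (p : AddGroupSeminorm G)

theorem map_zsmul_le_abs_mul (n : ℤ) (g : G) : p (n • g) ≤ |(n : ℝ)| * p g := by
  let _ : SeminormedAddCommGroup G := p.toSeminormedAddCommGroup
  exact (norm_zsmul_le n g).trans_eq (by rw [Int.norm_eq_abs]; rfl)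

theorem map_le_sum_abs_mul_map_single {ι : Type*} [Fintype ι] [DecidableEq ι]
    (Φ : (ι → ℤ) →+ G) (c : ι → ℤ) :
    p (Φ c) ≤ ∑ i, |(c i : ℝ)| * p (Φ (Pi.single i 1)) :=
  calc p (Φ c) = p (∑ i, Φ (Pi.single i (c i))) := by rw [← map_sum, Finset.univ_sum_single]
    _ ≤ ∑ i, p (Φ (Pi.single i (c i))) :=
      Finset.le_sum_of_subadditive p (map_zero p).le (map_add_le_add p) _ _
    _ = ∑ i, p (c i • Φ (Pi.single i 1)) := by
      simp only [← map_zsmul, ← Pi.single_smul, smul_eq_mul, mul_one]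
    _ ≤ ∑ i, |(c i : ℝ)| * p (Φ (Pi.single i 1)) := by
      gcongr with i
      exact map_zsmul_le_abs_mul p _ _

end AddGroupSeminorm

section Cube

variable {ι : Type*} [Fintype ι] [DecidableEq ι]

theorem exists_eq_add_nsmul_of_mem_Icc {q s : ℕ} (hs : 0 < s) {c : ι → ℤ}
    (hc : c ∈ Finset.Icc (-(q * s : ℕ) : ι → ℤ) (q * s : ℕ)) :
    ∃ r u : ι → ℤ, (∀ i, |r i| ≤ s) ∧ u ∈ Finset.Icc (-q : ι → ℤ) q ∧ c = r + s • u := by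
  have hs' : (0 : ℤ) < s := by exact_mod_cast hs
  rw [Finset.mem_Icc] at hc
  refine ⟨fun i => c i % s, fun i => c i / s, fun i => ?_,
    Finset.mem_Icc.2 ⟨fun i => ?_, fun i => ?_⟩, ?_⟩
  · rw [abs_of_nonneg (Int.emod_nonneg _ hs'.ne')]
    exact (Int.emod_lt_of_pos _ hs').le
  · refine (Int.le_ediv_iff_mul_le hs').2 ?_
    simpa using hc.1 i
  · refine Int.ediv_le_of_le_mul hs' ?_
    simpa using hc.2 i
  · ext i
    simp [Int.emod_add_mul_ediv]

theorem card_Icc_neg_natCast (k : ℕ) :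
    (Finset.Icc (-k : ι → ℤ) k).card = (2 * k + 1) ^ Fintype.card ι := by
  have hcard : ((k : ℤ) + 1 - -k).toNat = 2 * k + 1 := by lia
  simp only [Pi.card_Icc, Pi.neg_apply, Pi.natCast_apply, Int.card_Icc, hcard,
    Finset.prod_const, Finset.card_univ]

theorem exists_mem_Icc_neg_natCast (c : ι → ℤ) : ∃ d : ℕ, c ∈ Finset.Icc (-d : ι → ℤ) d := by
  refine ⟨Finset.univ.sup fun i => (c i).natAbs, ?_⟩
  have hle (i : ι) : |c i| ≤ (Finset.univ.sup fun i => (c i).natAbs : ℕ) := by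
    rw [Int.abs_eq_natAbs]
    exact_mod_cast Finset.le_sup (f := fun i => (c i).natAbs) (Finset.mem_univ i)
  exact Finset.mem_Icc.2 ⟨fun i => (abs_le.1 (hle i)).1, fun i => (abs_le.1 (hle i)).2⟩

theorem monotone_Icc_neg_natCast : Monotone fun k : ℕ => Finset.Icc (-k : ι → ℤ) k :=
  fun _ _ hjk => Finset.Icc_subset_Icc (neg_le_neg (Nat.mono_cast hjk)) (Nat.mono_cast hjk)

end Cube

theorem eventually_two_mul_add_one_pow_le_exp (n : ℕ) {c : ℝ} (hc : 0 < c) :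
    ∀ᶠ k : ℕ in atTop, (2 * k + 1 : ℝ) ^ n ≤ Real.exp (c * k) := by
  have htendsto : Tendsto (fun k : ℕ => (2 * k + 1 : ℝ)) atTop atTop :=
    tendsto_atTop_add_const_right _ _
      (tendsto_natCast_atTop_atTop.const_mul_atTop two_pos)
  have hlittleO := (isLittleO_pow_exp_pos_mul_atTop n (by positivity : 0 < c / 3)).comp_tendsto
    htendsto
  filter_upwards [hlittleO.eventuallyLE, eventually_ge_atTop 1] with k hk hk1
  have hk1' : (1 : ℝ) ≤ k := by exact_mod_cast hk1
  simp only [Function.comp_apply, Real.norm_eq_abs, Real.abs_exp] at hk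
  refine (le_abs_self _).trans (hk.trans (Real.exp_le_exp.2 ?_))
  nlinarith

theorem exists_le_mul_of_le_exp {S : ℕ → ℝ} (hS : Monotone S) (hS0 : 1 ≤ S 0) {ρ : ℝ}
    (hρ : 1 < ρ) {d k : ℕ} (hd : 0 < d) (hdk : d ≤ k)
    (hk : S k ≤ Real.exp (Real.log ρ / (2 * d) * k)) : ∃ j, S (j + d) ≤ ρ * S j := by
  by_contra! hgrowth
  have hpow (i : ℕ) : ρ ^ i ≤ S (i * d) := by
    induction i with
    | zero => simpa using hS0
    | succ i ih =>
      rw [pow_succ', Nat.succ_mul]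
      exact (by gcongr : ρ * ρ ^ i ≤ ρ * S (i * d)).trans (hgrowth _).le
  have hexp : Real.exp (Real.log ρ * (k / d : ℕ)) ≤ Real.exp (Real.log ρ / (2 * d) * k) :=
    calc Real.exp (Real.log ρ * (k / d : ℕ)) = ρ ^ (k / d) := by
          rw [Real.exp_mul, Real.exp_log (by positivity), Real.rpow_natCast]
      _ ≤ S (k / d * d) := hpow _
      _ ≤ S k := hS (Nat.div_mul_le_self k d)
      _ ≤ Real.exp (Real.log ρ / (2 * d) * k) := hk
  rw [Real.exp_le_exp, div_mul_eq_mul_div, mul_div_assoc,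
    mul_le_mul_iff_right₀ (Real.log_pos hρ), le_div_iff₀ (by positivity)] at hexp
  have hle : k / d * (2 * d) ≤ k := by exact_mod_cast hexp
  have hlt : k < k / d * d + d := Nat.lt_div_mul_add hd
  have hd_le : d ≤ k / d * d := Nat.le_mul_of_pos_left d (Nat.div_pos hdk hd)
  linarith

/-! ### Continuous cocycles -/

/-- A continuous real-valued 1-cocycle of an action of `G` on `X`. Each `Ω g` is bundled as an
element of `C(X, ℝ)`, so that for compact `X` it carries the supremum norm. -/
structure ContinuousCocycle (G X : Type*) [AddGroup G] [TopologicalSpace X] [AddAction G X] where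
  toFun : G → C(X, ℝ)
  apply_vadd_add' : ∀ g h x, toFun g (h +ᵥ x) + toFun h x = toFun (g + h) x

namespace ContinuousCocycle

section Basic

variable {G X : Type*} [AddGroup G] [TopologicalSpace X] [AddAction G X]

instance : FunLike (ContinuousCocycle G X) G C(X, ℝ) where
  coe := toFun
  coe_injective Ω Ω' h := by
    cases Ω
    cases Ω'
    congr

variable (Ω : ContinuousCocycle G X)

theorem map_add_apply (g h : G) (x : X) : Ω (g + h) x = Ω g (h +ᵥ x) + Ω h x :=
  (Ω.apply_vadd_add' g h x).symm

@[simp]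
protected theorem map_zero : Ω 0 = 0 := by
  ext x
  simpa using Ω.map_add_apply 0 0 x

theorem map_neg_apply (g : G) (x : X) : Ω (-g) x = -Ω g (-g +ᵥ x) := by
  rw [eq_neg_iff_add_eq_zero, add_comm, ← map_add_apply, add_neg_cancel, Ω.map_zero,
    ContinuousMap.zero_apply]

/-- The supremum norm `g ↦ ‖Ω g‖`, which the cocycle identity makes a seminorm on `G`. -/
noncomputable def supSeminorm [CompactSpace X] : AddGroupSeminorm G where
  toFun g := ‖Ω g‖
  map_zero' := by rw [Ω.map_zero, norm_zero]
  add_le' g h := by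
    refine (ContinuousMap.norm_le _ (by positivity)).2 fun x => ?_
    rw [map_add_apply]
    exact norm_add_le_of_le ((Ω g).norm_coe_le_norm _) ((Ω h).norm_coe_le_norm x)
  neg' g := by
    have norm_neg_le (k : G) : ‖Ω (-k)‖ ≤ ‖Ω k‖ :=
      (ContinuousMap.norm_le _ (norm_nonneg _)).2 fun x => by
        rw [map_neg_apply, norm_neg]
        exact (Ω k).norm_coe_le_norm _
    exact (norm_neg_le g).antisymm (by simpa using norm_neg_le (-g))

theorem abs_apply_le_supSeminorm [CompactSpace X] (g : G) (x : X) : |Ω g x| ≤ Ω.supSeminorm g :=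
  (Ω g).norm_coe_le_norm x

end Basic

/-! ### Sublinearity of zero-mean cocycles -/

section MeanErgodic

variable {G X : Type*} [AddCommGroup G] [TopologicalSpace X] [CompactSpace X] [AddAction G X]

theorem abs_apply_vadd_sub_apply_le (Ω : ContinuousCocycle G X) (g h : G) (x : X) :
    |Ω h (g +ᵥ x) - Ω h x| ≤ 2 * Ω.supSeminorm g := by
  have hcomm : Ω h (g +ᵥ x) - Ω h x = Ω g (h +ᵥ x) - Ω g x := by
    linarith [Ω.map_add_apply g h x, Ω.map_add_apply h g x, congrArg (Ω · x) (add_comm g h)]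
  rw [hcomm, two_mul]
  exact (abs_sub _ _).trans
    (add_le_add (Ω.abs_apply_le_supSeminorm g _) (Ω.abs_apply_le_supSeminorm g x))

variable [MeasurableSpace X] [BorelSpace X] [ContinuousConstVAdd G X]
  (Ω : ContinuousCocycle G X) {μ : Measure X}

theorem birkhoffSum_koopman [IsFiniteMeasure μ] [VAddInvariantMeasure G X μ] {p : ENNReal}
    [Fact (1 ≤ p)] (u : G) (s : ℕ) :
    birkhoffSum (koopman p μ u) id s (ContinuousMap.toLp p μ ℝ (Ω u)) =
      ContinuousMap.toLp p μ ℝ (Ω (s • u)) := by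
  have hshift (s : ℕ) (w : Lp ℝ p μ) :
      birkhoffSum (koopman p μ u) id s (koopman p μ u w) =
        koopman p μ u (birkhoffSum (koopman p μ u) id s w) := by
    simp only [birkhoffSum, id, map_sum, ← Function.iterate_succ_apply,
      ← Function.iterate_succ_apply']
  induction s with
  | zero => simp
  | succ s ih =>
    rw [birkhoffSum_succ', hshift, ih, id, koopman_toLp, ← map_add]
    congr 1
    ext x
    rw [succ_nsmul, map_add_apply, add_comm]
    rfl

variable [IsProbabilityMeasure μ]

theorem norm_koopman_toLp_sub_toLp_le [VAddInvariantMeasure G X μ] {p : ENNReal}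
    [Fact (1 ≤ p)] (g h : G) :
    ‖koopman p μ g (ContinuousMap.toLp p μ ℝ (Ω h)) - ContinuousMap.toLp p μ ℝ (Ω h)‖ ≤
      2 * Ω.supSeminorm g := by
  rw [koopman_toLp, ← map_sub]
  refine (ContinuousLinearMap.le_of_opNorm_le _ (ContinuousMap.toLp_norm_le μ) _).trans ?_
  rw [measureUnivNNReal, measure_univ, ENNReal.toNNReal_one, NNReal.coe_one, Real.one_rpow,
    one_mul]
  exact (ContinuousMap.norm_le _ (by positivity)).2 (Ω.abs_apply_vadd_sub_apply_le g h)

variable [ErgodicVAdd G X μ] {Ω}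

theorem tendsto_inv_smul_toLp_apply_nsmul (hmean : ∀ g, ∫ x, Ω g x ∂μ = 0) (u : G) :
    Tendsto (fun s : ℕ => (s : ℝ)⁻¹ • ContinuousMap.toLp 2 μ ℝ (Ω (s • u))) atTop (𝓝 0) := by
  obtain ⟨v, hv⟩ : ∃ v, Tendsto (fun s : ℕ => (s : ℝ)⁻¹ • ContinuousMap.toLp 2 μ ℝ (Ω (s • u)))
      atTop (𝓝 v) :=
    ⟨_, ((koopman 2 μ u).toContinuousLinearMap.tendsto_birkhoffAverage_orthogonalProjection
      (koopman 2 μ u).norm_toContinuousLinearMap_le _).congr fun s =>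
        congrArg ((s : ℝ)⁻¹ • ·) (Ω.birkhoffSum_koopman u s)⟩
  suffices v = 0 by rwa [this] at hv
  refine eq_zero_of_koopman_eq_of_integral_eq_zero G (fun g => ?_) ?_
  · refine sub_eq_zero.1 (tendsto_nhds_unique
      ((((koopman 2 μ g).continuous.tendsto v).comp hv).sub hv) ?_)
    refine squeeze_zero_norm (a := fun s : ℕ => (s : ℝ)⁻¹ * (2 * Ω.supSeminorm g)) (fun s => ?_) ?_
    · rw [Function.comp_apply, map_smul, ← smul_sub, norm_smul, norm_inv, Real.norm_natCast]
      gcongr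
      exact Ω.norm_koopman_toLp_sub_toLp_le g _
    · simpa using tendsto_inv_atTop_nhds_zero_nat.mul_const (2 * Ω.supSeminorm g)
  · have hinner (w : Lp ℝ 2 μ) :
        inner ℝ (indicatorConstLp 2 .univ (measure_ne_top μ _) (1 : ℝ)) w = ∫ x, w x ∂μ := by
      rw [L2.inner_indicatorConstLp_one, setIntegral_univ]
    rw [← hinner]
    refine tendsto_nhds_unique (tendsto_const_nhds.inner hv) ?_
    simp_rw [inner_smul_right, hinner, integral_congr_ae (ContinuousMap.coeFn_toLp μ _), hmean,
      mul_zero]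
    exact tendsto_const_nhds

theorem tendsto_integral_sq_div_sq (hmean : ∀ g, ∫ x, Ω g x ∂μ = 0) (u : G) :
    Tendsto (fun s : ℕ => (∫ x, Ω (s • u) x ^ 2 ∂μ) / (s : ℝ) ^ 2) atTop (𝓝 0) := by
  have hnorm := (tendsto_inv_smul_toLp_apply_nsmul hmean u).norm.pow 2
  rw [norm_zero, zero_pow two_ne_zero] at hnorm
  refine hnorm.congr fun s => ?_
  rw [norm_smul, mul_pow, norm_inv, Real.norm_natCast, inv_pow, inv_mul_eq_div,
    ← real_inner_self_eq_norm_sq, ContinuousMap.inner_toLp]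
  simp only [conj_trivial, sq]

theorem eventually_exists_forall_abs_apply_nsmul_le (hmean : ∀ g, ∫ x, Ω g x ∂μ = 0)
    (F : Finset G) {δ : ℝ} (hδ : 0 < δ) :
    ∀ᶠ s : ℕ in atTop, ∃ x, ∀ u ∈ F, |Ω (s • u) x| ≤ δ * s := by
  have hsum : Tendsto (fun s : ℕ => ∑ u ∈ F, (∫ x, Ω (s • u) x ^ 2 ∂μ) / (s : ℝ) ^ 2) atTop
      (𝓝 0) := by
    simpa using tendsto_finsetSum F fun u _ => tendsto_integral_sq_div_sq hmean u
  filter_upwards [hsum.eventually_le_const (pow_pos hδ 2), eventually_gt_atTop 0] with s hs hs0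
  have hint (u : G) : Integrable (fun x => Ω (s • u) x ^ 2) μ :=
    ((Ω (s • u)).continuous.pow 2).integrable_of_hasCompactSupport (.of_compactSpace _)
  obtain ⟨x, hx⟩ := exists_le_integral (integrable_finsetSum F fun u _ => hint u)
  refine ⟨x, fun u hu => abs_le_of_sq_le_sq ?_ (by positivity)⟩
  rw [← Finset.sum_div, div_le_iff₀ (by positivity)] at hs
  calc Ω (s • u) x ^ 2 ≤ ∑ u ∈ F, Ω (s • u) x ^ 2 :=
        Finset.single_le_sum (f := fun u => Ω (s • u) x ^ 2) (fun u _ => sq_nonneg _) hu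
    _ ≤ ∫ x, ∑ u ∈ F, Ω (s • u) x ^ 2 ∂μ := hx
    _ = ∑ u ∈ F, ∫ x, Ω (s • u) x ^ 2 ∂μ := integral_finsetSum F fun u _ => hint u
    _ ≤ (δ * s) ^ 2 := by rwa [mul_pow]

end MeanErgodic

section SlowGrowth

theorem abs_apply_le_of_forall_abs_apply_nsmul_le {G X ι : Type*} [AddCommGroup G]
    [TopologicalSpace X] [CompactSpace X] [AddAction G X] (Ω : ContinuousCocycle G X) [Fintype ι]
    [DecidableEq ι] (Φ : (ι → ℤ) →+ G) {q s : ℕ} (hs : 0 < s) {x : X} {A : ℝ}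
    (hA : ∀ u ∈ Finset.Icc (-q : ι → ℤ) q, |Ω (s • Φ u) x| ≤ A) {c : ι → ℤ}
    (hc : c ∈ Finset.Icc (-(q * s : ℕ) : ι → ℤ) (q * s : ℕ)) :
    |Ω (Φ c) x| ≤ s * ∑ i, Ω.supSeminorm (Φ (Pi.single i 1)) + A := by
  obtain ⟨r, u, hr, hu, rfl⟩ := exists_eq_add_nsmul_of_mem_Icc hs hc
  rw [map_add, map_nsmul, map_add_apply]
  refine (abs_add_le _ _).trans (add_le_add ?_ (hA u hu))
  calc |Ω (Φ r) (s • Φ u +ᵥ x)| ≤ Ω.supSeminorm (Φ r) := Ω.abs_apply_le_supSeminorm _ _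
    _ ≤ ∑ i, |(r i : ℝ)| * Ω.supSeminorm (Φ (Pi.single i 1)) :=
      map_le_sum_abs_mul_map_single _ Φ r
    _ ≤ s * ∑ i, Ω.supSeminorm (Φ (Pi.single i 1)) := by
      rw [Finset.mul_sum]
      gcongr with i
      exact_mod_cast hr i

theorem frequently_exists_forall_abs_apply_le {G X ι : Type*} [AddCommGroup G]
    [TopologicalSpace X] [CompactSpace X] [MeasurableSpace X] [BorelSpace X] [AddAction G X]
    [ContinuousConstVAdd G X] {Ω : ContinuousCocycle G X} {μ : Measure X}
    [IsProbabilityMeasure μ] [ErgodicVAdd G X μ] (hmean : ∀ g, ∫ x, Ω g x ∂μ = 0) [Fintype ι]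
    [DecidableEq ι] (Φ : (ι → ℤ) →+ G) {δ : ℝ} (hδ : 0 < δ) :
    ∃ᶠ k : ℕ in atTop, ∃ x, ∀ c ∈ Finset.Icc (-k : ι → ℤ) k, |Ω (Φ c) x| ≤ δ * k := by
  classical
  set K := ∑ i, Ω.supSeminorm (Φ (Pi.single i 1))
  obtain ⟨q, hq, hKq⟩ : ∃ q : ℕ, 0 < q ∧ K ≤ δ / 2 * q := by
    obtain ⟨q, hq⟩ := exists_nat_ge (K / (δ / 2))
    refine ⟨q + 1, q.succ_pos, ?_⟩
    rw [div_le_iff₀' (by positivity)] at hq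
    exact hq.trans (by gcongr; exact q.le_succ)
  have hgood := eventually_exists_forall_abs_apply_nsmul_le hmean
    ((Finset.Icc (-q : ι → ℤ) q).image Φ) (δ := δ / 2 * q) (by positivity)
  refine (tendsto_id.const_mul_atTop' hq).frequently (Eventually.frequently ?_)
  filter_upwards [hgood, eventually_gt_atTop 0] with s ⟨x, hx⟩ hs
  refine ⟨x, fun c hc => ?_⟩
  calc |Ω (Φ c) x| ≤ s * K + δ / 2 * q * s :=
        Ω.abs_apply_le_of_forall_abs_apply_nsmul_le Φ hs
          (fun u hu => hx _ (Finset.mem_image_of_mem Φ hu)) hc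
    _ ≤ s * (δ / 2 * q) + δ / 2 * q * s := by gcongr
    _ = δ * (q * s : ℕ) := by push_cast; ring

end SlowGrowth

/-! ### Conformal measures from almost invariant orbit measures -/

section Transfer

variable {G X : Type*} [AddGroup G] [TopologicalSpace X] [AddAction G X] [ContinuousConstVAdd G X]
  (Ω : ContinuousCocycle G X) (β : ℝ)

/-- The weighted composition operator `f ↦ f(g +ᵥ ·) e^{β Ω(g, ·)}`: a measure is
`e^{β·Ω}`-conformal when its integral is invariant under all of these operators. -/
noncomputable def transfer (g : G) : C(X, ℝ) →ₗ[ℝ] C(X, ℝ) where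
  toFun f := ⟨fun x => f (g +ᵥ x) * Real.exp (β * Ω g x), by fun_prop⟩
  map_add' f f' := by
    ext x
    simp [add_mul]
  map_smul' c f := by
    ext x
    simp [mul_assoc]

@[simp]
theorem transfer_apply (g : G) (f : C(X, ℝ)) (x : X) :
    Ω.transfer β g f x = f (g +ᵥ x) * Real.exp (β * Ω g x) :=
  rfl

theorem transfer_transfer (g h : G) (f : C(X, ℝ)) :
    Ω.transfer β h (Ω.transfer β g f) = Ω.transfer β (g + h) f := by
  ext x
  simp only [transfer_apply, vadd_vadd, map_add_apply, mul_add, Real.exp_add, mul_assoc]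

theorem transfer_zero (f : C(X, ℝ)) : Ω.transfer β 0 f = f := by
  ext x
  simp

theorem transfer_nonneg (g : G) {f : C(X, ℝ)} (hf : 0 ≤ f) : 0 ≤ Ω.transfer β g f :=
  fun _ => mul_nonneg (hf _) (Real.exp_pos _).le

variable [CompactSpace X] [MeasurableSpace X] [BorelSpace X]

theorem conformalMeasureAdd_of_integral_transfer_le {m : Measure X} [IsFiniteMeasure m]
    (h : ∀ g (f : C(X, ℝ)), 0 ≤ f → ∫ x, Ω.transfer β g f x ∂m ≤ ∫ x, f x ∂m) :
    ConformalMeasureAdd (fun g => Ω g) β m := by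
  have hnonneg (g : G) (f : C(X, ℝ)) (hf : 0 ≤ f) :
      ∫ x, Ω.transfer β g f x ∂m = ∫ x, f x ∂m := by
    refine (h g f hf).antisymm ?_
    simpa only [transfer_transfer, add_neg_cancel, transfer_zero] using
      h (-g) _ (Ω.transfer_nonneg β g hf)
  have hint (f : C(X, ℝ)) : Integrable f m :=
    f.continuous.integrable_of_hasCompactSupport (.of_compactSpace _)
  intro g f
  change ∫ x, Ω.transfer β g f x ∂m = ∫ x, f x ∂m
  rw [← posPart_sub_negPart f, map_sub]
  simp only [ContinuousMap.sub_apply]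
  rw [integral_sub (hint _) (hint _), integral_sub (hint _) (hint _),
    hnonneg g _ (posPart_nonneg f), hnonneg g _ (negPart_nonneg f)]

theorem exists_conformalMeasureAdd_of_tendsto [T2Space X] (m : ℕ → ProbabilityMeasure X)
    {ε : ℕ → ℝ} (hε : Tendsto ε atTop (𝓝 0))
    (h : ∀ g, ∀ᶠ N in atTop, ∀ f : C(X, ℝ), 0 ≤ f →
      ∫ x, Ω.transfer β g f x ∂(m N : Measure X) ≤ ∫ x, f x ∂(m N : Measure X) + ε N * ‖f‖) :
    ∃ m : Measure X, IsProbabilityMeasure m ∧ ConformalMeasureAdd (fun g => Ω g) β m := by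
  obtain ⟨m₀, -, hm₀⟩ := isCompact_univ.ultrafilter_le_nhds ((hyperfilter ℕ).map m) (by simp)
  have hlim (f : C(X, ℝ)) : Tendsto (fun N => ∫ x, f x ∂(m N : Measure X)) (hyperfilter ℕ)
      (𝓝 (∫ x, f x ∂(m₀ : Measure X))) :=
    ProbabilityMeasure.tendsto_iff_forall_integral_tendsto.1 hm₀
      (BoundedContinuousFunction.mkOfCompact f)
  refine ⟨m₀, m₀.2, Ω.conformalMeasureAdd_of_integral_transfer_le β fun g f hf => ?_⟩
  have hε' := (hε.mono_left Nat.hyperfilter_le_atTop).mul_const ‖f‖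
  simpa only [zero_mul, add_zero] using le_of_tendsto_of_tendsto (hlim _) ((hlim f).add hε')
    ((h g).filter_mono Nat.hyperfilter_le_atTop |>.mono fun N hN => hN f hf)

end Transfer

section Orbit

variable {G X : Type*} [AddGroup G] [TopologicalSpace X] [AddAction G X]
  (Ω : ContinuousCocycle G X) (β : ℝ) {B B' : Finset G} {x : X}

/-- The sum of `f` over the part `B +ᵥ x` of the orbit of `x`, the point `g +ᵥ x` having weight
`e^{β Ω(g, x)}`. For `f = 1` this is the partition function of `B` at `x`. -/
noncomputable def orbitSum (B : Finset G) (x : X) (f : C(X, ℝ)) : ℝ :=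
  ∑ g ∈ B, Real.exp (β * Ω g x) * f (g +ᵥ x)

theorem orbitSum_one : Ω.orbitSum β B x 1 = ∑ g ∈ B, Real.exp (β * Ω g x) := by
  simp [orbitSum]

theorem orbitSum_one_le {A : ℝ} (hA : ∀ g ∈ B, |Ω g x| ≤ A) :
    Ω.orbitSum β B x 1 ≤ B.card * Real.exp (|β| * A) := by
  rw [orbitSum_one, ← nsmul_eq_mul]
  refine Finset.sum_le_card_nsmul _ _ _ fun g hg => Real.exp_le_exp.2 ?_
  exact (le_abs_self _).trans ((abs_mul _ _).trans_le (by gcongr; exact hA g hg))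

theorem orbitSum_one_pos (hB : B.Nonempty) : 0 < Ω.orbitSum β B x 1 := by
  rw [orbitSum_one]
  exact Finset.sum_pos (fun _ _ => Real.exp_pos _) hB

theorem orbitSum_mono (hBB' : B ⊆ B') {f : C(X, ℝ)} (hf : 0 ≤ f) :
    Ω.orbitSum β B x f ≤ Ω.orbitSum β B' x f :=
  Finset.sum_le_sum_of_subset_of_nonneg hBB' fun _ _ _ => mul_nonneg (Real.exp_pos _).le (hf _)

theorem orbitSum_transfer [ContinuousConstVAdd G X] (g : G) (f : C(X, ℝ)) :
    Ω.orbitSum β B x (Ω.transfer β g f) = Ω.orbitSum β (B.map (addLeftEmbedding g)) x f := by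
  rw [orbitSum, orbitSum, Finset.sum_map]
  refine Finset.sum_congr rfl fun h _ => ?_
  rw [addLeftEmbedding_apply, transfer_apply, map_add_apply, mul_add, Real.exp_add, vadd_vadd]
  ring

theorem orbitSum_le_add_norm_mul [CompactSpace X] (hBB' : B ⊆ B') (f : C(X, ℝ)) :
    Ω.orbitSum β B' x f ≤
      Ω.orbitSum β B x f + (Ω.orbitSum β B' x 1 - Ω.orbitSum β B x 1) * ‖f‖ := by
  classical
  simp only [orbitSum, ← Finset.sum_sdiff hBB', add_sub_cancel_right, ContinuousMap.one_apply,
    mul_one]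
  rw [add_comm, Finset.sum_mul]
  gcongr with g
  exact f.apply_le_norm _

variable [MeasurableSpace X]

/-- The orbit sum over `B`, normalised to a probability measure (for nonempty `B`). -/
noncomputable def orbitMeasure (B : Finset G) (x : X) : Measure X :=
  ∑ g ∈ B, ENNReal.ofReal (Real.exp (β * Ω g x) / Ω.orbitSum β B x 1) • Measure.dirac (g +ᵥ x)

theorem isProbabilityMeasure_orbitMeasure (hB : B.Nonempty) :
    IsProbabilityMeasure (Ω.orbitMeasure β B x) := by
  have hpos := Ω.orbitSum_one_pos β (x := x) hB
  constructor
  simp only [orbitMeasure, Measure.coe_finsetSum, Finset.sum_apply, Measure.smul_apply,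
    measure_univ, smul_eq_mul, mul_one]
  rw [← ENNReal.ofReal_sum_of_nonneg fun _ _ => (div_pos (Real.exp_pos _) hpos).le,
    ← Finset.sum_div, ← orbitSum_one, div_self hpos.ne', ENNReal.ofReal_one]

variable [OpensMeasurableSpace X]

theorem integral_orbitMeasure (hB : B.Nonempty) (f : C(X, ℝ)) :
    ∫ y, f y ∂Ω.orbitMeasure β B x = Ω.orbitSum β B x f / Ω.orbitSum β B x 1 := by
  have hpos := Ω.orbitSum_one_pos β (x := x) hB
  have hf : StronglyMeasurable f := f.continuous.stronglyMeasurable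
  have hint (g : G) : Integrable f (Measure.dirac (g +ᵥ x)) := integrable_dirac' hf (by simp)
  rw [orbitMeasure, integral_finsetSum_measure fun g _ =>
    (hint g).smul_measure ENNReal.ofReal_ne_top, orbitSum.eq_def _ _ _ _ f, Finset.sum_div]
  refine Finset.sum_congr rfl fun g _ => ?_
  rw [integral_smul_measure, integral_dirac' _ _ hf,
    ENNReal.toReal_ofReal (div_pos (Real.exp_pos _) hpos).le, smul_eq_mul, div_mul_eq_mul_div]

theorem integral_transfer_orbitMeasure_le [CompactSpace X] [ContinuousConstVAdd G X]
    (hB : B.Nonempty) (hBB' : B ⊆ B') {g : G} (hg : ∀ h ∈ B, g + h ∈ B') {η : ℝ}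
    (hη : Ω.orbitSum β B' x 1 ≤ (1 + η) * Ω.orbitSum β B x 1) {f : C(X, ℝ)} (hf : 0 ≤ f) :
    ∫ y, Ω.transfer β g f y ∂Ω.orbitMeasure β B x ≤
      ∫ y, f y ∂Ω.orbitMeasure β B x + η * ‖f‖ := by
  have hpos := Ω.orbitSum_one_pos β (x := x) hB
  have hshift : B.map (addLeftEmbedding g) ⊆ B' := by
    simpa [Finset.subset_iff] using hg
  rw [integral_orbitMeasure Ω β hB, integral_orbitMeasure Ω β hB, div_add' _ _ _ hpos.ne',
    div_le_div_iff_of_pos_right hpos]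
  calc Ω.orbitSum β B x (Ω.transfer β g f)
      = Ω.orbitSum β (B.map (addLeftEmbedding g)) x f := Ω.orbitSum_transfer β g f
    _ ≤ Ω.orbitSum β B' x f := Ω.orbitSum_mono β hshift hf
    _ ≤ Ω.orbitSum β B x f + (Ω.orbitSum β B' x 1 - Ω.orbitSum β B x 1) * ‖f‖ :=
      Ω.orbitSum_le_add_norm_mul β hBB' f
    _ ≤ Ω.orbitSum β B x f + η * Ω.orbitSum β B x 1 * ‖f‖ := by
      gcongr
      linarith
    _ = Ω.orbitSum β B x f + η * ‖f‖ * Ω.orbitSum β B x 1 := by ring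

end Orbit

section Criterion

variable {G X : Type*} [AddGroup G] [TopologicalSpace X] [AddAction G X]
  (Ω : ContinuousCocycle G X) {β : ℝ} {B : ℕ → Finset G}

theorem exists_orbitSum_add_le_mul (hB : Monotone B) (h0 : 0 ∈ B 0)
    (hgrowth : ∀ c > 0, ∃ᶠ k : ℕ in atTop, ∃ x, Ω.orbitSum β (B k) x 1 ≤ Real.exp (c * k))
    {ρ : ℝ} (hρ : 1 < ρ) {d : ℕ} (hd : 0 < d) :
    ∃ j x, Ω.orbitSum β (B (j + d)) x 1 ≤ ρ * Ω.orbitSum β (B j) x 1 := by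
  obtain ⟨k, ⟨x, hx⟩, hdk⟩ := ((hgrowth (Real.log ρ / (2 * d))
    (div_pos (Real.log_pos hρ) (by positivity))).and_eventually (eventually_ge_atTop d)).exists
  have hmono : Monotone fun k => Ω.orbitSum β (B k) x 1 := fun _ _ hij =>
    Ω.orbitSum_mono β (hB hij) zero_le_one
  have hone : 1 ≤ Ω.orbitSum β (B 0) x 1 := by
    simpa [orbitSum] using
      Ω.orbitSum_mono β (x := x) (Finset.singleton_subset_iff.2 h0) (zero_le_one' C(X, ℝ))
  obtain ⟨j, hj⟩ := exists_le_mul_of_le_exp hmono hone hρ hd hdk hx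
  exact ⟨j, x, hj⟩

theorem exists_conformalMeasureAdd_of_frequently_orbitSum_le [CompactSpace X] [T2Space X]
    [MeasurableSpace X] [BorelSpace X] [ContinuousConstVAdd G X] (hB : Monotone B) (h0 : 0 ∈ B 0)
    (hBadd : ∀ g, ∃ d, ∀ k, ∀ h ∈ B k, g + h ∈ B (k + d))
    (hgrowth : ∀ c > 0, ∃ᶠ k : ℕ in atTop, ∃ x, Ω.orbitSum β (B k) x 1 ≤ Real.exp (c * k)) :
    ∃ m : Measure X, IsProbabilityMeasure m ∧ ConformalMeasureAdd (fun g => Ω g) β m := by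
  have hratio (N : ℕ) := Ω.exists_orbitSum_add_le_mul hB h0 hgrowth
    (lt_add_of_pos_right 1 (Nat.one_div_pos_of_nat (α := ℝ) (n := N))) N.succ_pos
  choose j x hj using hratio
  have hne (N : ℕ) : (B (j N)).Nonempty := ⟨0, hB (Nat.zero_le _) h0⟩
  refine Ω.exists_conformalMeasureAdd_of_tendsto β
    (fun N => ⟨_, Ω.isProbabilityMeasure_orbitMeasure β (x := x N) (hne N)⟩)
    tendsto_one_div_add_atTop_nhds_zero_nat fun g => ?_
  obtain ⟨d, hd⟩ := hBadd g
  filter_upwards [eventually_ge_atTop d] with N hN f hf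
  refine Ω.integral_transfer_orbitMeasure_le β (hne N) (hB (Nat.le_add_right _ _))
    (fun h hh => hB ?_ (hd _ h hh)) (hj N) hf
  lia

end Criterion

section FinitelyGenerated

variable {G X : Type*} [AddCommGroup G] [TopologicalSpace X] [AddAction G X]
  [CompactSpace X] [MeasurableSpace X] [BorelSpace X] [ContinuousConstVAdd G X]
  {Ω : ContinuousCocycle G X} {μ : Measure X} [IsProbabilityMeasure μ] [ErgodicVAdd G X μ]

theorem frequently_orbitSum_image_Icc_le (hmean : ∀ g, ∫ x, Ω g x ∂μ = 0) {ι : Type*} [Fintype ι]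
    [DecidableEq ι] [DecidableEq G] (Φ : (ι → ℤ) →+ G) (β : ℝ) {c : ℝ} (hc : 0 < c) :
    ∃ᶠ k : ℕ in atTop, ∃ x,
      Ω.orbitSum β ((Finset.Icc (-k : ι → ℤ) k).image Φ) x 1 ≤ Real.exp (c * k) := by
  obtain ⟨δ, hδ, hβδ⟩ : ∃ δ > 0, |β| * δ ≤ c / 2 := by
    refine ⟨c / 2 / (|β| + 1), by positivity, ?_⟩
    rw [mul_div_left_comm]
    exact mul_le_of_le_one_right (by positivity) (div_le_one_of_le₀ (by linarith) (by positivity))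
  have hcard := eventually_two_mul_add_one_pow_le_exp (Fintype.card ι) (half_pos hc)
  refine ((frequently_exists_forall_abs_apply_le hmean Φ hδ).and_eventually hcard).mono ?_
  rintro k ⟨⟨x, hx⟩, hk⟩
  refine ⟨x, ?_⟩
  calc Ω.orbitSum β ((Finset.Icc (-k : ι → ℤ) k).image Φ) x 1
      ≤ ((Finset.Icc (-k : ι → ℤ) k).image Φ).card * Real.exp (|β| * (δ * k)) :=
        Ω.orbitSum_one_le β (Finset.forall_mem_image.2 hx)
    _ ≤ (2 * k + 1 : ℝ) ^ Fintype.card ι * Real.exp (|β| * (δ * k)) := by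
      gcongr
      exact_mod_cast Finset.card_image_le.trans_eq (card_Icc_neg_natCast k)
    _ ≤ Real.exp (c / 2 * k) * Real.exp (c / 2 * k) := by
      rw [← mul_assoc]
      gcongr
    _ = Real.exp (c * k) := by
      rw [← Real.exp_add, ← add_mul, add_halves]

end FinitelyGenerated

end ContinuousCocycle

theorem kms_spectrum_full_of_ergodic_zero_mean_general {G X : Type*} [AddCommGroup G]
    [AddGroup.FG G] [TopologicalSpace X] [CompactSpace X] [T2Space X] [MeasurableSpace X]
    [BorelSpace X] [AddAction G X] [ContinuousConstVAdd G X] (Ω : ContinuousCocycle G X)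
    (μ : Measure X) [IsProbabilityMeasure μ] [ErgodicVAdd G X μ]
    (hmean : ∀ g, ∫ x, Ω g x ∂μ = 0) (β : ℝ) :
    ∃ m : Measure X, IsProbabilityMeasure m ∧ ConformalMeasureAdd (fun g => Ω g) β m := by
  classical
  obtain ⟨n, Φ, hΦ⟩ := Module.Finite.exists_fin' ℤ G
  refine Ω.exists_conformalMeasureAdd_of_frequently_orbitSum_le
    (B := fun k => (Finset.Icc (-k : Fin n → ℤ) k).image Φ)
    (fun j k hjk => Finset.image_subset_image (monotone_Icc_neg_natCast hjk))
    (Finset.mem_image.2 ⟨0, by simp, map_zero Φ⟩) (fun g => ?_)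
    fun c hc => ContinuousCocycle.frequently_orbitSum_image_Icc_le hmean
      Φ.toAddMonoidHom β hc
  obtain ⟨c, rfl⟩ := hΦ g
  obtain ⟨d, hd⟩ := exists_mem_Icc_neg_natCast c
  refine ⟨d, fun k => Finset.forall_mem_image.2 fun u hu => ?_⟩
  rw [← map_add]
  refine Finset.mem_image_of_mem Φ ?_
  rw [Finset.mem_Icc] at hd hu ⊢
  rw [Nat.cast_add, neg_add_rev, add_comm (k : Fin n → ℤ)]
  exact ⟨add_le_add hd.1 hu.1, add_le_add hd.2 hu.2⟩

/-- For an action of `ℤⁿ` with a continuous 1-cocycle `Ω`: if there is an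
ergodic invariant probability measure `μ` with `∫ Ω(g,·) dμ = 0` for all `g`, then for
every `β` there is an `e^{β·Ω}`-conformal probability measure (the KMS spectrum is `ℝ`). -/
theorem kms_spectrum_full_of_ergodic_zero_mean
    {n : ℕ} {X : Type*} [TopologicalSpace X] [CompactSpace X]
    [TopologicalSpace.MetrizableSpace X] [MeasurableSpace X] [BorelSpace X]
    [AddAction (Fin n → ℤ) X] [ContinuousConstVAdd (Fin n → ℤ) X]
    (Ω : (Fin n → ℤ) → X → ℝ) (hΩcont : ∀ g, Continuous (Ω g))
    (hΩ : ∀ (g h : Fin n → ℤ) (x : X), Ω g (h +ᵥ x) + Ω h x = Ω (g + h) x)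
    (μ : Measure X) [IsProbabilityMeasure μ]
    (hμinv : ∀ g : Fin n → ℤ, Measure.map (fun x => g +ᵥ x) μ = μ)
    (herg : ∀ B : Set X, MeasurableSet B →
      (∀ g : Fin n → ℤ, (fun x => g +ᵥ x) ⁻¹' B = B) → μ B = 0 ∨ μ B = 1)
    (hmean : ∀ g : Fin n → ℤ, ∫ x, Ω g x ∂μ = 0) :
    ∀ β : ℝ, ∃ m : Measure X, IsProbabilityMeasure m ∧ ConformalMeasureAdd Ω β m := by
  have : VAddInvariantMeasure (Fin n → ℤ) X μ :=
    ((vaddInvariantMeasure_tfae (Fin n → ℤ) μ).out 5 0).1 hμinv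
  have : ErgodicVAdd (Fin n → ℤ) X μ := ergodicVAdd_of_forall_preimage_eq fun B hB hinv => by
    rw [eventuallyConst_set', ae_eq_empty, ae_eq_univ, prob_compl_eq_zero_iff hB]
    exact herg B hB hinv
  exact kms_spectrum_full_of_ergodic_zero_mean_general ⟨fun g => ⟨Ω g, hΩcont g⟩, hΩ⟩ μ hmean
end

section
/- Let ℤⁿ act on a compact metrizable space X, uniquely ergodically with unique invariant probability measure μ, and let Ω : ℤⁿ × X → ℝ be a continuous 1-cocycle. Fix a nontrivial a ∈ ℤⁿ and x ∈ X, and suppose limsup_{g→∞} Ω(g,x)/|g| ≤ 0. Then ∫_X Ω(a,y) dμ(y) ≤ 0. -/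
open MeasureTheory Filter

open Function ProbabilityMeasure
open scoped Topology NNReal

/-!
Write `Ω(ma, x) = ∑_{k<m} Ω(a, ka·x)`. A weak limit `ν` of the empirical measures of the orbit
`x, a·x, 2a·x, …` is `a`-invariant, and `∫ Ω(a,·) dν` is a limit value of `Ω(ma, x)/m`. Since the
group is commutative, `Ω(a, g·y) = Ω(a, y) + Ω(g, a·y) - Ω(g, y)`: translating `Ω(a,·)` by `g`
changes it by an `a`-coboundary, whose `ν`-integral is zero. So the `a`-invariant probability
measures with the same integral of `Ω(a,·)` as `ν` form a closed set stable under averaging over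
translates, and the Markov–Kakutani argument finds in it a measure invariant under everything, that
is, `μ`. Hence `Ω(ma, x)/m → ∫ Ω(a,·) dμ` for every `x`, and the sign of the integral can be read
off along the ray `ma`.
-/

lemma birkhoffAverage_semiconj {α β R M : Type*} [DivisionSemiring R] [AddCommMonoid M]
    [Module R M] {h : α → β} {f : α → α} {f' : β → β} (hf : Semiconj h f f') (φ : β → M) (m : ℕ)
    (x : α) : birkhoffAverage R f' φ m (h x) = birkhoffAverage R f (φ ∘ h) m x := by
  simp only [birkhoffAverage, birkhoffSum, comp_apply, (hf.iterate_right _).eq]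

lemma birkhoffAverage_eq_of_mapsTo {α R M : Type*} [DivisionSemiring R] [AddCommMonoid M]
    [Module R M] {f : α → α} {K : Set α} (hK : Set.MapsTo f K K) {φ : α → M} {c : M}
    (hφ : ∀ x ∈ K, φ x = c) {m : ℕ} (hm : (m : R) ≠ 0) {x : α} (hx : x ∈ K) :
    birkhoffAverage R f φ m x = c := by
  have on_orbit (k : ℕ) : φ (f^[k] x) = c := hφ _ (hK.iterate k hx)
  simp only [birkhoffAverage, birkhoffSum, on_orbit, Finset.sum_const, Finset.card_range]
  rw [← Nat.cast_smul_eq_nsmul R, inv_smul_smul₀ hm]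

section Averaging

variable {X : Type*} [TopologicalSpace X] [MeasurableSpace X] [BorelSpace X]

/-- The action of a continuous map on probability measures, as a self-map that can be iterated. -/
noncomputable def pushforward (T : C(X, X)) (ν : ProbabilityMeasure X) : ProbabilityMeasure X :=
  ν.map T.continuous.measurable.aemeasurable

lemma continuous_pushforward (T : C(X, X)) : Continuous (pushforward T) :=
  continuous_map T.continuous

lemma pushforward_diracProba (T : C(X, X)) (x : X) :
    pushforward T (diracProba x) = diracProba (T x) :=
  Subtype.ext (Measure.map_dirac' T.continuous.measurable x)

lemma pushforward_commute {S T : C(X, X)} (hST : Function.Commute S T) :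
    Function.Commute (pushforward S) (pushforward T) := fun ν => by
  apply Subtype.ext
  change Measure.map S (Measure.map T (ν : Measure X)) = Measure.map T (Measure.map S ν)
  rw [Measure.map_map S.continuous.measurable T.continuous.measurable,
    Measure.map_map T.continuous.measurable S.continuous.measurable, hST.comp_eq]

lemma integral_pushforward (T : C(X, X)) (ν : ProbabilityMeasure X) (f : C(X, ℝ)) :
    ∫ y, f y ∂(pushforward T ν) = ∫ y, f (T y) ∂ν :=
  integral_map T.continuous.measurable.aemeasurable
    (map_continuous f).measurable.aestronglyMeasurable

/-- The Cesàro mean `(m + 1)⁻¹ ∑_{k ≤ m} (T^k)_* ν`. The index is shifted so that every term is a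
probability measure: `birkhoffAverage` is `0` at `0`. -/
noncomputable def cesaroMean (T : C(X, X)) (ν : ProbabilityMeasure X) (m : ℕ) :
    ProbabilityMeasure X :=
  ⟨birkhoffAverage ℝ≥0 (pushforward T) toMeasure (m + 1) ν, ⟨by
    simp [birkhoffAverage, birkhoffSum, ENNReal.smul_def, ENNReal.inv_mul_cancel]⟩⟩

lemma isClosed_setOf_pushforward_eq [HasOuterApproxClosed X] (T : C(X, X)) :
    IsClosed {ν : ProbabilityMeasure X | pushforward T ν = ν} :=
  isClosed_eq (continuous_pushforward T) continuous_id

lemma probabilityMeasure_ext_integral [HasOuterApproxClosed X] {ν ρ : ProbabilityMeasure X}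
    (h : ∀ f : C(X, ℝ), ∫ y, f y ∂ν = ∫ y, f y ∂ρ) : ν = ρ := by
  have toMeasure_eq : (ν : Measure X) = ρ :=
    ext_of_forall_integral_eq_of_IsFiniteMeasure fun f => h f.toContinuousMap
  exact Subtype.ext toMeasure_eq

variable [CompactSpace X]

lemma integral_cesaroMean (T : C(X, X)) (ν : ProbabilityMeasure X) (m : ℕ) (f : C(X, ℝ)) :
    ∫ y, f y ∂(cesaroMean T ν m) =
      birkhoffAverage ℝ (pushforward T) (fun ρ => ∫ y, f y ∂ρ) (m + 1) ν := by
  have integrable (ρ : ProbabilityMeasure X) : Integrable f ρ :=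
    (map_continuous f).integrable_of_hasCompactSupport (.of_compactSpace f)
  simp only [cesaroMean, birkhoffAverage, birkhoffSum]
  rw [coe_mk, integral_smul_nnreal_measure, integral_finsetSum_measure fun _ _ => integrable _]
  simp [NNReal.smul_def]

lemma integral_cesaroMean_diracProba (T : C(X, X)) (x : X) (m : ℕ) (f : C(X, ℝ)) :
    ∫ y, f y ∂(cesaroMean T (diracProba x) m) = birkhoffAverage ℝ T f (m + 1) x := by
  have semiconj : Semiconj diracProba T (pushforward T) := fun y =>
    (pushforward_diracProba T y).symm
  rw [integral_cesaroMean, birkhoffAverage_semiconj semiconj]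
  congr 1
  ext y
  exact integral_dirac' f y (map_continuous f).stronglyMeasurable

variable [HasOuterApproxClosed X]

lemma pushforward_cesaroMean {S T : C(X, X)} (hST : Function.Commute S T) (ν : ProbabilityMeasure X)
    (m : ℕ) : pushforward S (cesaroMean T ν m) = cesaroMean T (pushforward S ν) m := by
  refine probabilityMeasure_ext_integral fun f => ?_
  calc ∫ y, f y ∂(pushforward S (cesaroMean T ν m))
      = ∫ y, (f.comp S) y ∂(cesaroMean T ν m) := integral_pushforward S _ f
    _ = birkhoffAverage ℝ (pushforward T)
          ((fun ρ : ProbabilityMeasure X => ∫ y, f y ∂ρ) ∘ pushforward S) (m + 1) ν := by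
      rw [integral_cesaroMean]
      congr 1
      ext ρ
      exact (integral_pushforward S ρ f).symm
    _ = ∫ y, f y ∂(cesaroMean T (pushforward S ν) m) := by
      rw [integral_cesaroMean, birkhoffAverage_semiconj (pushforward_commute hST)]

lemma pushforward_eq_of_tendsto_cesaroMean {T : C(X, X)} {ν ρ : ProbabilityMeasure X}
    {l : Filter ℕ} [l.NeBot] (hl : l ≤ atTop) (h : Tendsto (cesaroMean T ν) l (𝓝 ρ)) :
    pushforward T ρ = ρ := by
  refine probabilityMeasure_ext_integral fun f => ?_
  have bounded : Bornology.IsBounded (Set.range fun σ : ProbabilityMeasure X => ∫ y, f y ∂σ) :=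
    (isBounded_iff_forall_norm_le).2 ⟨‖f‖, by
      rintro _ ⟨σ, rfl⟩
      simpa using norm_integral_le_of_norm_le_const (μ := (σ : Measure X))
        (Eventually.of_forall f.norm_coe_le_norm)⟩
  have defect : Tendsto (fun m => ∫ y, f y ∂(pushforward T (cesaroMean T ν m)) -
      ∫ y, f y ∂(cesaroMean T ν m)) l (𝓝 0) := by
    simp only [pushforward_cesaroMean (Function.Commute.refl T), integral_cesaroMean]
    exact ((tendsto_add_atTop_iff_nat 1).2
      (tendsto_birkhoffAverage_apply_sub_birkhoffAverage' ℝ bounded _ _)).mono_left hl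
  have integral_tendsto := (continuous_integral_continuousMap f).tendsto
  exact sub_eq_zero.1 <| tendsto_nhds_unique
    (((integral_tendsto _).comp (((continuous_pushforward T).tendsto _).comp h)).sub
      ((integral_tendsto _).comp h)) defect

variable [T2Space X]

lemma exists_mem_pushforward_eq {K : Set (ProbabilityMeasure X)} (hK : IsClosed K)
    (hne : K.Nonempty) (T : C(X, X)) (hcesaro : ∀ ν ∈ K, ∀ m, cesaroMean T ν m ∈ K) :
    ∃ ν ∈ K, pushforward T ν = ν := by
  obtain ⟨ν, hν⟩ := hne
  obtain ⟨ρ, -, hρ⟩ := isCompact_univ.ultrafilter_le_nhds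
    ((hyperfilter ℕ).map (cesaroMean T ν)) (by simp)
  exact ⟨ρ, hK.mem_of_tendsto hρ (Eventually.of_forall (hcesaro ν hν)),
    pushforward_eq_of_tendsto_cesaroMean Nat.hyperfilter_le_atTop hρ⟩

/-- A form of the **Markov–Kakutani theorem** for probability measures, with stability under Cesàro
means in place of convexity and invariance. -/
theorem exists_mem_forall_pushforward_eq {ι : Type*} {T : ι → C(X, X)}
    (hT : ∀ i j, Function.Commute (T i) (T j)) {K : Set (ProbabilityMeasure X)} (hK : IsClosed K)
    (hne : K.Nonempty) (hcesaro : ∀ i, ∀ ν ∈ K, ∀ m, cesaroMean (T i) ν m ∈ K) :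
    ∃ ν ∈ K, ∀ i, pushforward (T i) ν = ν := by
  let fixed (i : ι) : Set (ProbabilityMeasure X) := {ν | pushforward (T i) ν = ν}
  have fixed_closed (i : ι) : IsClosed (fixed i) := isClosed_setOf_pushforward_eq (T i)
  have finite_inter (S : Finset ι) : (K ∩ ⋂ i ∈ S, fixed i).Nonempty := by
    classical
    induction S using Finset.induction_on with
    | empty => simpa using hne
    | insert j S _ ih =>
      have closed : IsClosed (K ∩ ⋂ i ∈ S, fixed i) :=
        hK.inter (isClosed_biInter fun i _ => fixed_closed i)
      have stable : ∀ ν ∈ K ∩ ⋂ i ∈ S, fixed i, ∀ m,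
          cesaroMean (T j) ν m ∈ K ∩ ⋂ i ∈ S, fixed i := by
        rintro ν ⟨hνK, hνS⟩ m
        refine ⟨hcesaro j ν hνK m, Set.mem_iInter₂.2 fun i hi => ?_⟩
        have hi : pushforward (T i) ν = ν := Set.mem_iInter₂.1 hνS i hi
        exact (pushforward_cesaroMean (hT i j) ν m).trans (by rw [hi])
      obtain ⟨ν, ⟨hνK, hνS⟩, hνj⟩ := exists_mem_pushforward_eq closed ih (T j) stable
      refine ⟨ν, hνK, ?_⟩
      rw [Finset.set_biInter_insert]
      exact ⟨hνj, hνS⟩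
  obtain ⟨ν, hνK, hν⟩ := hK.isCompact.inter_iInter_nonempty fixed fixed_closed finite_inter
  exact ⟨ν, hνK, fun i => Set.mem_iInter.1 hν i⟩

end Averaging

section Translation

variable {G : Type*} (X : Type*) [TopologicalSpace X]

/-- Translation by `g` as a bundled continuous map, so that it can be fed to `pushforward`. -/
def translation [AddMonoid G] [AddAction G X] [ContinuousConstVAdd G X] (g : G) : C(X, X) :=
  ⟨(g +ᵥ ·), continuous_const_vadd g⟩

variable {X}

lemma translation_commute [AddCommMonoid G] [AddAction G X] [ContinuousConstVAdd G X] (g h : G) :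
    Function.Commute (translation X g) (translation X h) :=
  vadd_comm g h

end Translation

lemma addGroupSeminorm_zsmul_le {E : Type*} [AddCommGroup E] (p : AddGroupSeminorm E) (k : ℤ)
    (g : E) : p (k • g) ≤ ‖k‖ * p g :=
  letI := p.toSeminormedAddCommGroup
  norm_zsmul_le k g

lemma addGroupSeminorm_pi_int_le {ι : Type*} [Fintype ι] [DecidableEq ι]
    (p : AddGroupSeminorm (ι → ℤ)) (g : ι → ℤ) : p g ≤ (∑ i, p (Pi.single i 1)) * ‖g‖ :=
  calc p g = p (∑ i, g i • Pi.single i 1) := congrArg p (pi_eq_sum_univ' g)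
    _ ≤ ∑ i, p (g i • Pi.single i 1) :=
      Finset.le_sum_of_subadditive p (map_zero p).le (map_add_le_add p) _ _
    _ ≤ ∑ i, p (Pi.single i 1) * ‖g‖ := Finset.sum_le_sum fun i _ => by
      rw [mul_comm]
      exact (addGroupSeminorm_zsmul_le p _ _).trans
        (mul_le_mul_of_nonneg_right (norm_le_pi_norm g i) (apply_nonneg p _))
    _ = (∑ i, p (Pi.single i 1)) * ‖g‖ := (Finset.sum_mul ..).symm

/-- An additive cocycle `Ω` over an action of `G` on `X`, the group-valued analogue of the Birkhoff
sums of a function along a single map. -/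
def IsAddCocycle {G X A : Type*} [AddMonoid G] [AddAction G X] [Add A] (Ω : G → X → A) : Prop :=
  ∀ g h x, Ω g (h +ᵥ x) + Ω h x = Ω (g + h) x

namespace IsAddCocycle

section Algebra

variable {G X A : Type*} [AddCommGroup A] {Ω : G → X → A}

lemma map_zero [AddMonoid G] [AddAction G X] (hΩ : IsAddCocycle Ω) (x : X) : Ω 0 x = 0 := by
  simpa using hΩ 0 0 x

lemma map_neg [AddGroup G] [AddAction G X] (hΩ : IsAddCocycle Ω) (g : G) (x : X) :
    Ω (-g) x = -Ω g (-g +ᵥ x) := by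
  rw [eq_neg_iff_add_eq_zero, add_comm, hΩ, add_neg_cancel, hΩ.map_zero]

lemma map_nsmul_eq_birkhoffSum [AddMonoid G] [AddAction G X] (hΩ : IsAddCocycle Ω) (a : G) (m : ℕ)
    (x : X) : Ω (m • a) x = birkhoffSum (a +ᵥ ·) (Ω a) m x := by
  induction m with
  | zero => simpa using hΩ.map_zero x
  | succ m ih => rw [birkhoffSum_succ, ← ih, vadd_iterate, succ_nsmul', ← hΩ, add_comm]

lemma map_vadd_eq_add_coboundary [AddCommMonoid G] [AddAction G X] (hΩ : IsAddCocycle Ω) (a g : G)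
    (x : X) : Ω a (g +ᵥ x) = Ω a x + (Ω g (a +ᵥ x) - Ω g x) := by
  rw [← add_sub_assoc, eq_sub_iff_add_eq, hΩ, add_comm (Ω a x), hΩ, add_comm a g]

end Algebra

lemma integral_vadd_eq_of_measurePreserving {G X : Type*} [AddCommMonoid G] [AddAction G X]
    [MeasurableSpace X] {Ω : G → X → ℝ} (hΩ : IsAddCocycle Ω) {ν : Measure X} {a g : G}
    (ha : MeasurePreserving (a +ᵥ ·) ν ν) (ha_int : Integrable (Ω a) ν)
    (hg_int : Integrable (Ω g) ν) : ∫ y, Ω a (g +ᵥ y) ∂ν = ∫ y, Ω a y ∂ν := by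
  have translate_int : Integrable (fun y => Ω g (a +ᵥ y)) ν :=
    ha.integrable_comp_of_integrable hg_int
  have translate : ∫ y, Ω g (a +ᵥ y) ∂ν = ∫ y, Ω g y ∂ν := by
    conv_rhs => rw [← ha.map_eq]
    exact (integral_map ha.aemeasurable (ha.map_eq.symm ▸ hg_int.aestronglyMeasurable)).symm
  calc ∫ y, Ω a (g +ᵥ y) ∂ν = ∫ y, Ω a y + (Ω g (a +ᵥ y) - Ω g y) ∂ν := by
        simp only [hΩ.map_vadd_eq_add_coboundary a g]
    _ = ∫ y, Ω a y ∂ν + (∫ y, Ω g (a +ᵥ y) ∂ν - ∫ y, Ω g y ∂ν) := by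
        rw [← integral_sub translate_int hg_int]
        exact integral_add ha_int (translate_int.sub hg_int)
    _ = ∫ y, Ω a y ∂ν := by rw [translate, sub_self, add_zero]

section Growth

variable {G X : Type*} [TopologicalSpace X] [CompactSpace X] [AddGroup G] [AddAction G X]
  {Ω : G → X → ℝ}

/-- The sup norm `g ↦ ‖Ω g‖` of a continuous cocycle, which the cocycle identity makes a seminorm
on the group. -/
noncomputable def supSeminorm (hΩ : IsAddCocycle Ω) (hcont : ∀ g, Continuous (Ω g)) :
    AddGroupSeminorm G where
  toFun g := ‖(⟨Ω g, hcont g⟩ : C(X, ℝ))‖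
  map_zero' := norm_eq_zero.2 (ContinuousMap.ext hΩ.map_zero)
  add_le' g h := (ContinuousMap.norm_le _ (by positivity)).2 fun x => by
    rw [ContinuousMap.coe_mk, ← hΩ]
    exact (norm_add_le _ _).trans (add_le_add
      (ContinuousMap.norm_coe_le_norm ⟨Ω g, hcont g⟩ _)
      (ContinuousMap.norm_coe_le_norm ⟨Ω h, hcont h⟩ _))
  neg' g := by
    have neg_le (g : G) : ‖(⟨Ω (-g), hcont (-g)⟩ : C(X, ℝ))‖ ≤ ‖(⟨Ω g, hcont g⟩ : C(X, ℝ))‖ :=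
      (ContinuousMap.norm_le _ (norm_nonneg _)).2 fun x => by
        rw [ContinuousMap.coe_mk, hΩ.map_neg, norm_neg]
        exact ContinuousMap.norm_coe_le_norm ⟨Ω g, hcont g⟩ _
    exact (neg_le g).antisymm (by simpa using neg_le (-g))

lemma norm_le_supSeminorm (hΩ : IsAddCocycle Ω) (hcont : ∀ g, Continuous (Ω g)) (g : G) (x : X) :
    ‖Ω g x‖ ≤ hΩ.supSeminorm hcont g :=
  ContinuousMap.norm_coe_le_norm ⟨Ω g, hcont g⟩ x

lemma exists_norm_le_mul_norm {ι : Type*} [Fintype ι] [AddAction (ι → ℤ) X]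
    {Ω : (ι → ℤ) → X → ℝ} (hΩ : IsAddCocycle Ω) (hcont : ∀ g, Continuous (Ω g)) :
    ∃ C : ℝ, ∀ g x, ‖Ω g x‖ ≤ C * ‖g‖ := by
  classical
  exact ⟨_, fun g x => (hΩ.norm_le_supSeminorm hcont g x).trans (addGroupSeminorm_pi_int_le _ g)⟩

end Growth

section UniqueErgodicity

variable {G X : Type*} [AddCommMonoid G] [TopologicalSpace X] [CompactSpace X] [T2Space X]
  [HasOuterApproxClosed X] [MeasurableSpace X] [BorelSpace X] [AddAction G X]
  [ContinuousConstVAdd G X] {Ω : G → X → ℝ}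

lemma exists_invariant_integral_eq (hΩ : IsAddCocycle Ω) (hcont : ∀ g, Continuous (Ω g)) {a : G}
    {ν : ProbabilityMeasure X} (hν : pushforward (translation X a) ν = ν) :
    ∃ ρ : ProbabilityMeasure X, (∀ g : G, pushforward (translation X g) ρ = ρ) ∧
      ∫ y, Ω a y ∂ρ = ∫ y, Ω a y ∂ν := by
  let f (g : G) : C(X, ℝ) := ⟨Ω g, hcont g⟩
  let K : Set (ProbabilityMeasure X) :=
    {ρ | pushforward (translation X a) ρ = ρ} ∩ {ρ | ∫ y, Ω a y ∂ρ = ∫ y, Ω a y ∂ν}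
  have closed : IsClosed K := (isClosed_setOf_pushforward_eq _).inter
    (isClosed_eq (continuous_integral_continuousMap (f a)) continuous_const)
  have integrable (ρ : ProbabilityMeasure X) (g : G) : Integrable (Ω g) ρ :=
    (hcont g).integrable_of_hasCompactSupport (.of_compactSpace _)
  have mapsTo (g : G) : Set.MapsTo (pushforward (translation X g)) K K := by
    rintro ρ ⟨hρ, hρ_int⟩
    refine ⟨(pushforward_commute (translation_commute a g) ρ).trans (by rw [hρ]), ?_⟩
    have preserving : MeasurePreserving (a +ᵥ ·) (ρ : Measure X) ρ :=
      ⟨(continuous_const_vadd a).measurable, congrArg toMeasure hρ⟩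
    exact (integral_pushforward (translation X g) ρ (f a)).trans <|
      (hΩ.integral_vadd_eq_of_measurePreserving preserving (integrable ρ a)
        (integrable ρ g)).trans hρ_int
  have stable (g : G) : ∀ ρ ∈ K, ∀ m, cesaroMean (translation X g) ρ m ∈ K := fun ρ hρ m =>
    ⟨(pushforward_cesaroMean (translation_commute a g) ρ m).trans (by rw [hρ.1]),
      (integral_cesaroMean _ ρ m (f a)).trans <|
        birkhoffAverage_eq_of_mapsTo (mapsTo g) (fun _ hσ => hσ.2) (by positivity) hρ⟩
  obtain ⟨ρ, hρ, hinv⟩ :=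
    exists_mem_forall_pushforward_eq translation_commute closed ⟨ν, hν, rfl⟩ stable
  exact ⟨ρ, hinv, hρ.2⟩

theorem tendsto_nsmul_div_integral (hΩ : IsAddCocycle Ω) (hcont : ∀ g, Continuous (Ω g))
    {μ : Measure X} (hμ : ∀ ν : Measure X, IsProbabilityMeasure ν →
      (∀ g : G, Measure.map (fun x => g +ᵥ x) ν = ν) → ν = μ) (a : G) (x : X) :
    Tendsto (fun m : ℕ => Ω (m • a) x / m) atTop (𝓝 (∫ y, Ω a y ∂μ)) := by
  let T := translation X a
  let f : C(X, ℝ) := ⟨Ω a, hcont a⟩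
  have empirical (m : ℕ) :
      ∫ y, f y ∂(cesaroMean T (diracProba x) m) = Ω ((m + 1) • a) x / (m + 1 : ℕ) := by
    rw [integral_cesaroMean_diracProba, hΩ.map_nsmul_eq_birkhoffSum, div_eq_inv_mul]
    rfl
  rw [← tendsto_add_atTop_iff_nat 1, tendsto_iff_ultrafilter]
  intro l hl
  obtain ⟨ν, -, hν⟩ := isCompact_univ.ultrafilter_le_nhds
    (l.map (cesaroMean T (diracProba x))) (by simp)
  obtain ⟨ρ, hρ, hρ_int⟩ :=
    hΩ.exists_invariant_integral_eq hcont (pushforward_eq_of_tendsto_cesaroMean hl hν)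
  have ρ_eq : (ρ : Measure X) = μ := hμ ρ inferInstance fun g => congrArg toMeasure (hρ g)
  rw [← ρ_eq, hρ_int]
  exact (((continuous_integral_continuousMap f).tendsto ν).comp hν).congr empirical

end UniqueErgodicity

end IsAddCocycle

lemma limsup_nsmul_div_nonpos_of_limsup_div_norm {E : Type*} [SeminormedAddCommGroup E]
    [NormSMulClass ℤ E] {u : E → ℝ} {C : ℝ} (hC : ∀ g, |u g| ≤ C * ‖g‖) {a : E} (ha : ‖a‖ ≠ 0)
    (hu : limsup (fun g => u g / ‖g‖) (comap norm atTop) ≤ 0) :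
    limsup (fun m : ℕ => u (m • a) / m) atTop ≤ 0 := by
  have norm_pos : 0 < ‖a‖ := ha.symm.lt_of_le (norm_nonneg a)
  have C_nonneg : 0 ≤ C := nonneg_of_mul_nonneg_left ((abs_nonneg _).trans (hC a)) norm_pos
  have norm_ray (m : ℕ) : ‖m • a‖ = m * ‖a‖ := by
    rw [← natCast_zsmul, norm_smul, norm_natCast]
  have ray_tendsto : Tendsto (fun m : ℕ => m • a) atTop (comap norm atTop) := by
    simp only [tendsto_comap_iff, comp_def, norm_ray]
    exact tendsto_natCast_atTop_atTop.atTop_mul_const norm_pos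
  -- The real `limsup` takes a junk value where the function is not bounded above.
  have bounded : IsBoundedUnder (· ≤ ·) (comap norm atTop) fun g => u g / ‖g‖ :=
    isBoundedUnder_of ⟨C, fun g =>
      div_le_of_le_mul₀ (norm_nonneg g) C_nonneg ((le_abs_self _).trans (hC g))⟩
  have ray_bounded : IsBoundedUnder (· ≥ ·) atTop fun m : ℕ => u (m • a) / m :=
    isBoundedUnder_of ⟨-(C * ‖a‖), fun m => (abs_le.1 <| by
      rw [abs_div, Nat.abs_cast]
      refine div_le_of_le_mul₀ m.cast_nonneg (by positivity) ((hC _).trans_eq ?_)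
      rw [norm_ray]
      ring).1⟩
  refine le_of_forall_pos_le_add fun ε hε => ?_
  have small : ∀ᶠ m : ℕ in atTop, u (m • a) / ‖m • a‖ < ε / ‖a‖ :=
    ray_tendsto.eventually (eventually_lt_of_limsup_lt (hu.trans_lt (div_pos hε norm_pos)) bounded)
  refine limsup_le_of_le ray_bounded.isCoboundedUnder_le ?_
  filter_upwards [small] with m hm
  rw [norm_ray, ← div_div, div_lt_div_iff_of_pos_right norm_pos] at hm
  simpa using hm.le

theorem integral_cocycle_nonpos_of_limsup_general {G X : Type*} [AddCommMonoid G]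
    [TopologicalSpace X] [CompactSpace X] [T2Space X] [HasOuterApproxClosed X] [MeasurableSpace X]
    [BorelSpace X] [AddAction G X] [ContinuousConstVAdd G X]
    (Ω : G → X → ℝ) (hΩcont : ∀ g, Continuous (Ω g)) (hΩ : IsAddCocycle Ω) (μ : Measure X)
    (hμuniq : ∀ ν : Measure X, IsProbabilityMeasure ν →
      (∀ g : G, Measure.map (fun x => g +ᵥ x) ν = ν) → ν = μ)
    (a : G) (x : X) (hx : limsup (fun m : ℕ => Ω (m • a) x / m) atTop ≤ 0) :
    ∫ y, Ω a y ∂μ ≤ 0 :=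
  (hΩ.tendsto_nsmul_div_integral hΩcont hμuniq a x).limsup_eq ▸ hx

/-- For a uniquely ergodic `ℤⁿ`-action with unique invariant measure `μ`
and a continuous 1-cocycle `Ω`: if at some point `x` one has
`limsup_{g→∞} Ω(g,x)/‖g‖ ≤ 0`, then `∫ Ω(a,·) dμ ≤ 0` for every nontrivial `a`. -/
theorem integral_cocycle_nonpos_of_limsup
    {n : ℕ} {X : Type*} [TopologicalSpace X] [CompactSpace X]
    [TopologicalSpace.MetrizableSpace X] [MeasurableSpace X] [BorelSpace X]
    [AddAction (Fin n → ℤ) X] [ContinuousConstVAdd (Fin n → ℤ) X]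
    (Ω : (Fin n → ℤ) → X → ℝ) (hΩcont : ∀ g, Continuous (Ω g))
    (hΩ : ∀ (g h : Fin n → ℤ) (x : X), Ω g (h +ᵥ x) + Ω h x = Ω (g + h) x)
    (μ : Measure X) [IsProbabilityMeasure μ]
    (hμinv : ∀ g : Fin n → ℤ, Measure.map (fun x => g +ᵥ x) μ = μ)
    (hμuniq : ∀ ν : Measure X, IsProbabilityMeasure ν →
      (∀ g : Fin n → ℤ, Measure.map (fun x => g +ᵥ x) ν = ν) → ν = μ)
    (a : Fin n → ℤ) (ha : a ≠ 0) (x : X)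
    (hx : Filter.limsup (fun g : Fin n → ℤ => Ω g x / ‖g‖)
      (Filter.comap (fun g : Fin n → ℤ => ‖g‖) Filter.atTop) ≤ 0) :
    ∫ y, Ω a y ∂μ ≤ 0 := by
  obtain ⟨C, hC⟩ := IsAddCocycle.exists_norm_le_mul_norm hΩ hΩcont
  exact integral_cocycle_nonpos_of_limsup_general Ω hΩcont hΩ μ hμuniq a x
    (limsup_nsmul_div_nonpos_of_limsup_div_norm (hC · x) (norm_ne_zero_iff.2 ha) hx)
end

section
/- Let ℤⁿ act uniquely ergodically on a compact metrizable space X with unique invariant measure μ, and let Ω be a continuous 1-cocycle. Then the KMS spectrum K = {β : ∃ e^{β·Ω}-conformal probability measure} equals ℝ if Ω_μ = 0 and equals {0} if Ω_μ ≠ 0, where Ω_μ(g) = ∫_X Ω(g,x) dμ(x). -/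
open MeasureTheory

/-!
The cocycle identity gives `Ω(kg, hx) - Ω(kg, x) = Ω(h, kg·x) - Ω(h, x)`, which is bounded in `k`.
So `Ω(kg, ·)` stays within bounded distance of its average over the translates by a fixed finite
set, and over a large Følner set that average is uniformly close to `k Ω_μ(g)` by unique ergodicity:
`Ω(kg, x) = k Ω_μ(g) + o(k)` uniformly in `x`.

If `m` is `e^{β·Ω}`-conformal, then `∫ e^{β Ω(kg, ·)} dm = 1`, so for `β ≠ 0` the function
`Ω(kg, ·)` cannot have constant strict sign, which forces `Ω_μ(g) = 0`. Conversely, if `Ω_μ = 0`,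
then the sums of `e^{β Ω(g, x)}` over the boxes generated by finitely many elements of the group
grow subexponentially. Hence some boxes have a boundary of negligible weight, and the normalised
measures `∑ e^{β Ω(g, x)} δ_{gx}` over these boxes accumulate at conformal measures. For `β = 0`
the same accumulation argument is the uniform ergodic theorem.
-/

open Filter Topology Asymptotics
open scoped Pointwise symmDiff

/-- A real-valued continuous `1`-cocycle for an additive action on `X`. -/
structure IsContinuousCocycle {G X : Type*} [AddGroup G] [TopologicalSpace X] [AddAction G X]
    (Ω : G → X → ℝ) : Prop where
  continuous : ∀ g, Continuous (Ω g)
  vadd_add : ∀ g h x, Ω g (h +ᵥ x) + Ω h x = Ω (g + h) x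

namespace IsContinuousCocycle

section AddGroup

variable {G X : Type*} [AddGroup G] [TopologicalSpace X] [AddAction G X] {Ω : G → X → ℝ}

variable (G X) in
protected lemma zero : IsContinuousCocycle (0 : G → X → ℝ) where
  continuous _ := continuous_zero
  vadd_add _ _ _ := add_zero 0

lemma zero_apply (hΩ : IsContinuousCocycle Ω) (x : X) : Ω 0 x = 0 := by
  simpa using hΩ.vadd_add 0 0 x

lemma neg_apply (hΩ : IsContinuousCocycle Ω) (g : G) (x : X) :
    Ω (-g) x = -Ω g (-g +ᵥ x) := by
  have h := hΩ.vadd_add g (-g) x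
  rw [add_neg_cancel, hΩ.zero_apply] at h
  linarith

lemma nsmul_apply (hΩ : IsContinuousCocycle Ω) (g : G) (k : ℕ) (x : X) :
    Ω (k • g) x = ∑ j ∈ Finset.range k, Ω g (j • g +ᵥ x) := by
  induction k with
  | zero => simp [hΩ.zero_apply]
  | succ k ih => rw [Finset.sum_range_succ, ← ih, succ_nsmul', ← hΩ.vadd_add, add_comm]

lemma exists_abs_le [CompactSpace X] (hΩ : IsContinuousCocycle Ω) (g : G) :
    ∃ C, ∀ x, |Ω g x| ≤ C :=
  let f : C(X, ℝ) := ⟨Ω g, hΩ.continuous g⟩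
  ⟨‖f‖, f.norm_coe_le_norm⟩

end AddGroup

section AddCommGroup

variable {G X : Type*} [AddCommGroup G] [TopologicalSpace X] [AddAction G X] {Ω : G → X → ℝ}

lemma apply_vadd (hΩ : IsContinuousCocycle Ω) (g h : G) (x : X) :
    Ω g (h +ᵥ x) = Ω g x + (Ω h (g +ᵥ x) - Ω h x) := by
  have hgh := hΩ.vadd_add g h x
  rw [add_comm g h, ← hΩ.vadd_add h g x] at hgh
  linarith

lemma abs_apply_sum_le (hΩ : IsContinuousCocycle Ω) {ι : Type*} (s : Finset ι) (v : ι → G)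
    (C : ι → ℝ) (hC : ∀ i x, |Ω (v i) x| ≤ C i) (x : X) :
    |Ω (∑ i ∈ s, v i) x| ≤ ∑ i ∈ s, C i := by
  induction s using Finset.cons_induction generalizing x with
  | empty => simp [hΩ.zero_apply]
  | cons i s hi ih =>
    rw [Finset.sum_cons, Finset.sum_cons, ← hΩ.vadd_add]
    exact (abs_add_le _ _).trans (add_le_add (hC i _) (ih x))

end AddCommGroup

end IsContinuousCocycle

/-- A cocycle is sublinear if along every cyclic subgroup it grows slower than any linear function,
uniformly on `X`. The additive constant `C` absorbs the finitely many small multiples of `g`. -/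
def IsSublinear {G X : Type*} [AddMonoid G] (Ω : G → X → ℝ) : Prop :=
  ∀ g, ∀ ε > 0, ∃ C, ∀ (k : ℕ) x, |Ω (k • g) x| ≤ ε * k + C

lemma isSublinear_zero (G X : Type*) [AddMonoid G] : IsSublinear (0 : G → X → ℝ) :=
  fun _ ε _ => ⟨0, fun k _ => by simpa using by positivity⟩

section SubexponentialGrowth

/-- A sequence of real numbers is of subexponential growth if it is `O(cᴺ)` for every `c > 1`. -/
def IsSubexponential (Z : ℕ → ℝ) : Prop :=
  ∀ c : ℝ, 1 < c → Z =O[atTop] fun N => c ^ N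

lemma IsSubexponential.exists_add_le_mul {Z : ℕ → ℝ} (hZ : IsSubexponential Z) (hZ₀ : 0 < Z 0)
    (r : ℕ) {q : ℝ} (hq : 1 < q) : ∃ N, Z (N + r) ≤ q * Z N := by
  by_contra! hlt
  have hgeom : ∀ j : ℕ, q ^ j * Z 0 ≤ Z (r * j) := fun j => by
    induction j with
    | zero => simp
    | succ j ih =>
      calc q ^ (j + 1) * Z 0 = q * (q ^ j * Z 0) := by ring
        _ ≤ q * Z (r * j) := by gcongr
        _ ≤ Z (r * (j + 1)) := (hlt (r * j)).le
  obtain ⟨c, hc, hcq⟩ : ∃ c : ℝ, 1 < c ∧ c ^ r < q := by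
    have hcont : Tendsto (fun c : ℝ => c ^ r) (𝓝[>] 1) (𝓝 1) := by
      simpa using ((continuous_pow r).tendsto (1 : ℝ)).mono_left nhdsWithin_le_nhds
    exact (eventually_mem_nhdsWithin.and (hcont.eventually_lt_const hq)).exists
  have hcr : 0 < c ^ r := by positivity
  obtain ⟨C, -, hC⟩ := bound_of_isBigO_nat_atTop (hZ c hc)
  obtain ⟨j, hj⟩ := pow_unbounded_of_one_lt (C / Z 0) ((one_lt_div hcr).2 hcq)
  rw [div_lt_iff₀ hZ₀, div_pow, div_mul_eq_mul_div, lt_div_iff₀ (by positivity)] at hj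
  have hCj := (le_abs_self _).trans (hC (x := r * j) (by positivity))
  rw [Real.norm_of_nonneg (by positivity), pow_mul] at hCj
  exact hj.not_ge ((hgeom j).trans hCj)

lemma isSubexponential_of_le_linear_pow_mul {Z : ℕ → ℝ} (d : ℕ) (hZ₀ : ∀ N, 0 ≤ Z N)
    (hZ : ∀ c : ℝ, 1 < c → ∃ C, ∀ N : ℕ, Z N ≤ (2 * N + 1) ^ d * (C * c ^ N)) :
    IsSubexponential Z := by
  intro c hc
  have hc' : 1 < √c := Real.lt_sqrt_of_sq_lt (by simpa)
  obtain ⟨C, hC⟩ := hZ √c hc'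
  have hpoly : (fun N : ℕ => (2 * N + 1 : ℝ) ^ d) =O[atTop] fun N => √c ^ N := by
    have hlin : (fun N : ℕ => (2 * N + 1 : ℝ)) =O[atTop] fun N => (N : ℝ) := by
      refine .of_bound 3 ((eventually_ge_atTop 1).mono fun N hN => ?_)
      have hN : (1 : ℝ) ≤ N := by exact_mod_cast hN
      rw [Real.norm_of_nonneg (by positivity), Real.norm_of_nonneg (by positivity)]
      linarith
    exact (hlin.pow d).trans (isLittleO_pow_const_const_pow_of_one_lt d hc').isBigO
  have hsq : (fun N : ℕ => √c ^ N * √c ^ N) = fun N => c ^ N := funext fun N => by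
    rw [← mul_pow, Real.mul_self_sqrt (by linarith)]
  rw [← hsq]
  exact (IsBigO.of_norm_le fun N => by simpa [abs_of_nonneg (hZ₀ N)] using hC N).trans
    (hpoly.mul (isBigO_const_mul_self C _ atTop))

end SubexponentialGrowth

section LatticeBox

variable {G ι : Type*} [AddCommGroup G] [DecidableEq G] [Fintype ι] [DecidableEq ι]

/-- The set of all `∑ i, a i • v i` with integer coefficients `|a i| ≤ N`, i.e. the image in `G` of
a cube of `ℤ^ι`. -/
noncomputable def latticeBox (v : ι → G) (N : ℕ) : Finset G :=
  (Finset.Icc (fun _ => -(N : ℤ)) fun _ => (N : ℤ)).image fun a : ι → ℤ => ∑ i, a i • v i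

lemma mem_latticeBox {v : ι → G} {N : ℕ} {g : G} :
    g ∈ latticeBox v N ↔ ∃ a : ι → ℤ, (∀ i, |a i| ≤ N) ∧ ∑ i, a i • v i = g := by
  simp [latticeBox, Pi.le_def, abs_le, forall_and]

lemma latticeBox_nonempty (v : ι → G) (N : ℕ) : (latticeBox v N).Nonempty :=
  ⟨0, mem_latticeBox.2 ⟨0, by simp⟩⟩

lemma latticeBox_mono (v : ι → G) : Monotone (latticeBox v) := fun M N hMN g hg => by
  obtain ⟨a, ha, rfl⟩ := mem_latticeBox.1 hg
  exact mem_latticeBox.2 ⟨a, fun i => (ha i).trans (by exact_mod_cast hMN), rfl⟩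

lemma card_latticeBox_le (v : ι → G) (N : ℕ) :
    (latticeBox v N).card ≤ (2 * N + 1) ^ Fintype.card ι := by
  refine Finset.card_image_le.trans_eq ?_
  rw [Pi.card_Icc, Finset.prod_const, Int.card_Icc, Finset.card_univ]
  congr 1
  omega

lemma zsmul_add_mem_latticeBox {v : ι → G} {N : ℕ} {g : G} (hg : g ∈ latticeBox v N) (i : ι)
    {c : ℤ} (hc : |c| ≤ 1) : c • v i + g ∈ latticeBox v (N + 1) := by
  obtain ⟨a, ha, rfl⟩ := mem_latticeBox.1 hg
  refine mem_latticeBox.2 ⟨Pi.single i c + a, fun j => ?_, ?_⟩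
  · have hj : |(Pi.single i c : ι → ℤ) j| ≤ 1 := by
      obtain rfl | hij := eq_or_ne j i <;> simp [*]
    push_cast
    exact (abs_add_le _ _).trans (by linarith [ha j])
  · simp [add_smul, Finset.sum_add_distrib, Pi.single_apply]

lemma vadd_latticeBox_symmDiff_subset (v : ι → G) (i : ι) (N : ℕ) :
    (v i +ᵥ latticeBox v (N + 1)) ∆ latticeBox v (N + 1) ⊆
      latticeBox v (N + 2) \ latticeBox v N := by
  have hup : v i +ᵥ latticeBox v (N + 1) ⊆ latticeBox v (N + 2) := by
    rintro _ hvg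
    obtain ⟨g, hg, rfl⟩ := Finset.mem_vadd_finset.1 hvg
    simpa using zsmul_add_mem_latticeBox hg i (c := 1) (by simp)
  have hdown : latticeBox v N ⊆ v i +ᵥ latticeBox v (N + 1) := fun g hg =>
    Finset.mem_vadd_finset.2 ⟨-v i + g, by
      simpa using zsmul_add_mem_latticeBox hg i (c := -1) (by simp), by simp⟩
  have hmono := latticeBox_mono v
  rw [symmDiff_def]
  exact sup_le (Finset.sdiff_subset_sdiff hup (hmono N.le_succ))
    (Finset.sdiff_subset_sdiff (hmono (N + 1).le_succ) hdown)

end LatticeBox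

section WeightedFoelner

variable {G ι : Type*} [DecidableEq G]

/-- A family of finite sets `F i` is weighted Følner for the weights `φ i` along the filter `l` if
every translation changes `F i` by a set of asymptotically negligible relative weight. Constant
weights give the usual Følner condition. -/
def IsWeightedFoelner [AddGroup G] (l : Filter ι) (φ : ι → G → ℝ) (F : ι → Finset G) : Prop :=
  ∀ h : G, Tendsto (fun i => (∑ g ∈ (h +ᵥ F i) ∆ F i, φ i g) / ∑ g ∈ F i, φ i g) l (𝓝 0)

lemma exists_sum_symmDiff_le_of_isSubexponential [AddCommGroup G] [Fintype ι]
    [DecidableEq ι] {φ : G → ℝ} (hφ : ∀ g, 0 < φ g) (v : ι → G)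
    (hZ : IsSubexponential fun N => ∑ g ∈ latticeBox v N, φ g) {δ : ℝ} (hδ : 0 < δ) :
    ∃ F : Finset G, F.Nonempty ∧
      ∀ i, ∑ g ∈ (v i +ᵥ F) ∆ F, φ g ≤ δ * ∑ g ∈ F, φ g := by
  have hmono : Monotone fun N => ∑ g ∈ latticeBox v N, φ g := fun _ _ h =>
    Finset.sum_le_sum_of_subset_of_nonneg (latticeBox_mono v h) fun g _ _ => (hφ g).le
  obtain ⟨N, hN⟩ := hZ.exists_add_le_mul
    (Finset.sum_pos (fun g _ => hφ g) (latticeBox_nonempty v 0)) 2 (lt_add_of_pos_right 1 hδ)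
  refine ⟨latticeBox v (N + 1), latticeBox_nonempty v _, fun i => ?_⟩
  calc ∑ g ∈ (v i +ᵥ latticeBox v (N + 1)) ∆ latticeBox v (N + 1), φ g
      ≤ ∑ g ∈ latticeBox v (N + 2) \ latticeBox v N, φ g :=
        Finset.sum_le_sum_of_subset_of_nonneg (vadd_latticeBox_symmDiff_subset v i N)
          fun g _ _ => (hφ g).le
    _ = ∑ g ∈ latticeBox v (N + 2), φ g - ∑ g ∈ latticeBox v N, φ g := by
        rw [Finset.sum_sdiff_eq_sub (latticeBox_mono v (by omega))]
    _ ≤ δ * ∑ g ∈ latticeBox v N, φ g := by linarith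
    _ ≤ δ * ∑ g ∈ latticeBox v (N + 1), φ g := mul_le_mul_of_nonneg_left (hmono N.le_succ) hδ.le

lemma exists_isWeightedFoelner_of_forall_finset [AddGroup G] {φ : G → ℝ}
    (hφ : ∀ g, 0 ≤ φ g)
    (h : ∀ K : Finset G, ∀ δ > 0, ∃ F : Finset G, F.Nonempty ∧
      ∀ k ∈ K, ∑ g ∈ (k +ᵥ F) ∆ F, φ g ≤ δ * ∑ g ∈ F, φ g) :
    ∃ F : Finset G × ℕ → Finset G, (∀ i, (F i).Nonempty) ∧
      IsWeightedFoelner atTop (fun _ => φ) F := by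
  choose F hF₀ hF using fun i : Finset G × ℕ => h i.1 (1 / (i.2 + 1)) (by positivity)
  refine ⟨F, hF₀, fun k => ?_⟩
  have hlim : Tendsto (fun i : Finset G × ℕ => 1 / ((i.2 : ℝ) + 1)) atTop (𝓝 0) := by
    rw [← prod_atTop_atTop_eq]
    exact tendsto_one_div_add_atTop_nhds_zero_nat.comp tendsto_snd
  refine squeeze_zero' (.of_forall fun i => ?_) ?_ hlim
  · exact div_nonneg (Finset.sum_nonneg fun g _ => hφ g) (Finset.sum_nonneg fun g _ => hφ g)
  · filter_upwards [eventually_ge_atTop ({k}, 0)] with i hi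
    exact div_le_of_le_mul₀ (Finset.sum_nonneg fun g _ => hφ g) (by positivity)
      (hF i k (Finset.singleton_subset_iff.1 hi.1))

end WeightedFoelner

section Sublinear

variable {G X ι : Type*} [AddCommGroup G] [TopologicalSpace X] [AddAction G X] {Ω : G → X → ℝ}

lemma IsContinuousCocycle.abs_zsmul_apply_le (hΩ : IsContinuousCocycle Ω) {g : G} {b : ℕ → ℝ}
    (hb : ∀ (k : ℕ) x, |Ω (k • g) x| ≤ b k) (a : ℤ) (x : X) : |Ω (a • g) x| ≤ b a.natAbs := by
  obtain ha | ha := a.natAbs_eq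
  · rw [ha, natCast_zsmul, Int.natAbs_natCast]
    exact hb _ x
  · rw [ha, neg_smul, natCast_zsmul, hΩ.neg_apply, abs_neg, Int.natAbs_neg, Int.natAbs_natCast]
    exact hb _ _

variable [DecidableEq G]

lemma IsSublinear.exists_abs_le_latticeBox [Fintype ι] [DecidableEq ι] (hΩs : IsSublinear Ω)
    (hΩ : IsContinuousCocycle Ω) (v : ι → G) {ε : ℝ} (hε : 0 < ε) :
    ∃ C, ∀ N, ∀ g ∈ latticeBox v N, ∀ x, |Ω g x| ≤ ε * N + C := by
  set δ := ε / (Fintype.card ι + 1)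
  have hδ : 0 < δ := by positivity
  choose C hC using fun i => hΩs (v i) δ hδ
  refine ⟨∑ i, C i, fun N g hg x => ?_⟩
  obtain ⟨a, ha, rfl⟩ := mem_latticeBox.1 hg
  calc |Ω (∑ i, a i • v i) x| ≤ ∑ i, (δ * N + C i) := by
        refine hΩ.abs_apply_sum_le _ _ _ (fun i y => ?_) x
        refine (hΩ.abs_zsmul_apply_le (hC i) (a i) y).trans ?_
        have haN : (a i).natAbs ≤ N := by exact_mod_cast (Int.natCast_natAbs (a i)).trans_le (ha i)
        gcongr
    _ = Fintype.card ι * δ * N + ∑ i, C i := by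
        rw [Finset.sum_add_distrib, Finset.sum_const, Finset.card_univ, nsmul_eq_mul, mul_assoc]
    _ ≤ ε * N + ∑ i, C i := by
        gcongr
        rw [mul_div_assoc', div_le_iff₀ (by positivity)]
        linarith

lemma IsSublinear.isSubexponential_sum_exp [Fintype ι] [DecidableEq ι] (hΩs : IsSublinear Ω)
    (hΩ : IsContinuousCocycle Ω) (v : ι → G) (β : ℝ) (x : X) :
    IsSubexponential fun N => ∑ g ∈ latticeBox v N, Real.exp (β * Ω g x) := by
  refine isSubexponential_of_le_linear_pow_mul (Fintype.card ι)
    (fun N => Finset.sum_nonneg fun g _ => (Real.exp_pos _).le) fun c hc => ?_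
  have hlog := Real.log_pos hc
  obtain ⟨C, hC⟩ := hΩs.exists_abs_le_latticeBox hΩ v
    (ε := Real.log c / (|β| + 1)) (by positivity)
  have hexp : ∀ N, ∀ g ∈ latticeBox v N,
      Real.exp (β * Ω g x) ≤ Real.exp (|β| * C) * c ^ N := fun N g hg => by
    have hle : β * Ω g x ≤ |β| * C + N * Real.log c := by
      calc β * Ω g x ≤ |β| * |Ω g x| := (le_abs_self _).trans_eq (abs_mul _ _)
        _ ≤ |β| * (Real.log c / (|β| + 1) * N + C) := by gcongr; exact hC N g hg x
        _ = |β| * C + N * (|β| / (|β| + 1) * Real.log c) := by ring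
        _ ≤ |β| * C + N * (1 * Real.log c) := by
          gcongr
          exact div_le_one_of_le₀ (by linarith) (by positivity)
        _ = |β| * C + N * Real.log c := by rw [one_mul]
    calc Real.exp (β * Ω g x) ≤ Real.exp (|β| * C + N * Real.log c) := Real.exp_le_exp.2 hle
      _ = Real.exp (|β| * C) * c ^ N := by
        rw [Real.exp_add, Real.exp_nat_mul, Real.exp_log (zero_lt_one.trans hc)]
  refine ⟨Real.exp (|β| * C), fun N => (Finset.sum_le_card_nsmul _ _ _ (hexp N)).trans ?_⟩
  rw [nsmul_eq_mul]
  gcongr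
  exact_mod_cast card_latticeBox_le v N

lemma IsSublinear.exists_isWeightedFoelner (hΩs : IsSublinear Ω) (hΩ : IsContinuousCocycle Ω)
    (β : ℝ) (x : X) : ∃ F : Finset G × ℕ → Finset G, (∀ i, (F i).Nonempty) ∧
      IsWeightedFoelner atTop (fun _ g => Real.exp (β * Ω g x)) F := by
  refine exists_isWeightedFoelner_of_forall_finset (fun g => (Real.exp_pos _).le)
    fun K δ hδ => ?_
  obtain ⟨F, hF₀, hF⟩ := exists_sum_symmDiff_le_of_isSubexponential
    (fun g => Real.exp_pos _) _ (hΩs.isSubexponential_sum_exp hΩ (Subtype.val : K → G) β x) hδ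
  exact ⟨F, hF₀, fun k hk => hF ⟨k, hk⟩⟩

end Sublinear

lemma abs_sum_sub_sum_le_sum_symmDiff {α : Type*} [DecidableEq α] (s t : Finset α) (ψ : α → ℝ) :
    |∑ a ∈ s, ψ a - ∑ a ∈ t, ψ a| ≤ ∑ a ∈ s ∆ t, |ψ a| := by
  rw [← Finset.sum_sdiff_sub_sum_sdiff, symmDiff_def, Finset.sup_eq_union,
    Finset.sum_union (disjoint_sdiff_sdiff)]
  exact (abs_sub _ _).trans (add_le_add (Finset.abs_sum_le_sum_abs _ _)
    (Finset.abs_sum_le_sum_abs _ _))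

section OrbitMeasure

variable {G X : Type*} [MeasurableSpace X]

/-- The weighted orbit measure `(∑ g ∈ F, φ g)⁻¹ • ∑ g ∈ F, φ g • δ_{g +ᵥ x}`; conformal measures
arise as cluster points of such measures. -/
noncomputable def orbitMeasure [VAdd G X] (φ : G → ℝ) (F : Finset G) (x : X) : Measure X :=
  ∑ g ∈ F, ENNReal.ofReal (φ g / ∑ h ∈ F, φ h) • Measure.dirac (g +ᵥ x)

lemma isProbabilityMeasure_orbitMeasure [VAdd G X] {φ : G → ℝ} (hφ : ∀ g, 0 < φ g) {F : Finset G}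
    (hF : F.Nonempty) (x : X) : IsProbabilityMeasure (orbitMeasure φ F x) where
  measure_univ := by
    have hZ : 0 < ∑ g ∈ F, φ g := Finset.sum_pos (fun g _ => hφ g) hF
    simp only [orbitMeasure, Measure.coe_finsetSum, Finset.sum_apply, Measure.smul_apply,
      measure_univ, smul_eq_mul, mul_one]
    rw [← ENNReal.ofReal_sum_of_nonneg fun g _ => div_nonneg (hφ g).le hZ.le, ← Finset.sum_div,
      div_self hZ.ne', ENNReal.ofReal_one]

lemma integral_orbitMeasure [VAdd G X] [MeasurableSingletonClass X] {φ : G → ℝ}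
    (hφ : ∀ g, 0 ≤ φ g) (F : Finset G) (x : X) (f : X → ℝ) :
    ∫ y, f y ∂orbitMeasure φ F x = (∑ g ∈ F, φ g * f (g +ᵥ x)) / ∑ g ∈ F, φ g := by
  rw [orbitMeasure, integral_finsetSum_measure fun g _ =>
    (integrable_dirac enorm_lt_top).smul_measure ENNReal.ofReal_ne_top, Finset.sum_div]
  refine Finset.sum_congr rfl fun g _ => ?_
  rw [integral_smul_measure, integral_dirac, ENNReal.toReal_ofReal
    (div_nonneg (hφ g) (Finset.sum_nonneg fun h _ => hφ h)), smul_eq_mul, div_mul_eq_mul_div]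

variable [AddGroup G] [DecidableEq G] [TopologicalSpace X] [AddAction G X] {Ω : G → X → ℝ}

lemma IsContinuousCocycle.abs_integral_orbitMeasure_sub_le [CompactSpace X]
    [MeasurableSingletonClass X] (hΩ : IsContinuousCocycle Ω)
    (β : ℝ) (F : Finset G) (x : X) (h : G) (f : C(X, ℝ)) :
    let φ := fun g => Real.exp (β * Ω g x)
    |∫ y, f (h +ᵥ y) * Real.exp (β * Ω h y) ∂orbitMeasure φ F x - ∫ y, f y ∂orbitMeasure φ F x| ≤
      ‖f‖ * ((∑ g ∈ (h +ᵥ F) ∆ F, φ g) / ∑ g ∈ F, φ g) := by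
  intro φ
  have hφ : ∀ g, 0 ≤ φ g := fun g => (Real.exp_pos _).le
  have hshift : ∑ g ∈ F, φ g * (f (h +ᵥ g +ᵥ x) * Real.exp (β * Ω h (g +ᵥ x))) =
      ∑ g ∈ h +ᵥ F, φ g * f (g +ᵥ x) := by
    rw [Finset.vadd_finset_def, Finset.sum_image (AddAction.injective h).injOn]
    refine Finset.sum_congr rfl fun g _ => ?_
    simp only [φ, vadd_eq_add, ← hΩ.vadd_add, mul_add, Real.exp_add, add_vadd]
    ring
  rw [integral_orbitMeasure hφ, integral_orbitMeasure hφ, hshift, ← sub_div, abs_div,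
    abs_of_nonneg (Finset.sum_nonneg fun g _ => hφ g), mul_div_assoc']
  refine div_le_div_of_nonneg_right ?_ (Finset.sum_nonneg fun g _ => hφ g)
  calc |∑ g ∈ h +ᵥ F, φ g * f (g +ᵥ x) - ∑ g ∈ F, φ g * f (g +ᵥ x)|
      ≤ ∑ g ∈ (h +ᵥ F) ∆ F, |φ g * f (g +ᵥ x)| := abs_sum_sub_sum_le_sum_symmDiff _ _ _
    _ ≤ ∑ g ∈ (h +ᵥ F) ∆ F, ‖f‖ * φ g := by
        refine Finset.sum_le_sum fun g _ => ?_
        rw [abs_mul, abs_of_nonneg (hφ g), mul_comm]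
        exact mul_le_mul_of_nonneg_right (f.norm_coe_le_norm _) (hφ g)
    _ = ‖f‖ * ∑ g ∈ (h +ᵥ F) ∆ F, φ g := by rw [Finset.mul_sum]

end OrbitMeasure

section ConformalMeasure

variable {G X : Type*} [AddGroup G] [TopologicalSpace X] [MeasurableSpace X] [BorelSpace X]
  [AddAction G X] [ContinuousConstVAdd G X] {Ω : G → X → ℝ}

lemma conformalMeasureAdd_zero_iff [HasOuterApproxClosed X] {m : Measure X} [IsFiniteMeasure m] :
    ConformalMeasureAdd Ω 0 m ↔ ∀ g : G, m.map (fun x => g +ᵥ x) = m := by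
  have hmeas (g : G) : AEMeasurable (fun x : X => g +ᵥ x) m :=
    (continuous_const_vadd g).measurable.aemeasurable
  have hmap (g : G) (f : C(X, ℝ)) :
      ∫ x, f x ∂m.map (fun x => g +ᵥ x) = ∫ x, f (g +ᵥ x) * Real.exp (0 * Ω g x) ∂m := by
    rw [integral_map (hmeas g) f.continuous.aestronglyMeasurable]
    simp only [zero_mul, Real.exp_zero, mul_one]
  refine ⟨fun hm g => ext_of_forall_integral_eq_of_IsFiniteMeasure fun f => ?_, fun hm g f => ?_⟩
  · exact (hmap g f.toContinuousMap).trans (hm g f.toContinuousMap)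
  · rw [← hmap, hm]

variable [CompactSpace X] [T2Space X]

lemma IsContinuousCocycle.conformalMeasureAdd_of_mapClusterPt [DecidableEq G]
    (hΩ : IsContinuousCocycle Ω) {β : ℝ} {ι : Type*} {l : Filter ι} {F : ι → Finset G} {p : ι → X}
    (hF : IsWeightedFoelner l (fun i g => Real.exp (β * Ω g (p i))) F)
    {M : ι → ProbabilityMeasure X}
    (hM : ∀ i, (M i : Measure X) = orbitMeasure (fun g => Real.exp (β * Ω g (p i))) (F i) (p i))
    {m : ProbabilityMeasure X} (hm : MapClusterPt m l M) :
    ConformalMeasureAdd Ω β (m : Measure X) := by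
  intro h f
  obtain ⟨U, hUl, hU⟩ := mapClusterPt_iff_ultrafilter.1 hm
  have hcont : Continuous fun y => f (h +ᵥ y) * Real.exp (β * Ω h y) := by
    have := hΩ.continuous h
    fun_prop
  have hlim (k : C(X, ℝ)) : Tendsto (fun i => ∫ y, k y ∂(M i : Measure X)) U
      (𝓝 (∫ y, k y ∂(m : Measure X))) :=
    ProbabilityMeasure.tendsto_iff_forall_integral_tendsto.1 hU (.mkOfCompact k)
  refine sub_eq_zero.1 (tendsto_nhds_unique ((hlim ⟨_, hcont⟩).sub (hlim f))
    (squeeze_zero_norm (a := fun i => ‖f‖ * ((∑ g ∈ (h +ᵥ F i) ∆ F i, Real.exp (β * Ω g (p i))) /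
      ∑ g ∈ F i, Real.exp (β * Ω g (p i)))) (fun i => ?_) ?_))
  · rw [hM]
    exact hΩ.abs_integral_orbitMeasure_sub_le β (F i) (p i) h f
  · simpa using ((hF h).mono_left hUl).const_mul ‖f‖

lemma IsSublinear.exists_conformalMeasureAdd [Nonempty X] {G : Type*} [AddCommGroup G]
    [AddAction G X] [ContinuousConstVAdd G X] {Ω : G → X → ℝ} (hΩs : IsSublinear Ω)
    (hΩ : IsContinuousCocycle Ω) (β : ℝ) :
    ∃ m : Measure X, IsProbabilityMeasure m ∧ ConformalMeasureAdd Ω β m := by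
  classical
  have x := Classical.arbitrary X
  obtain ⟨F, hF₀, hF⟩ := hΩs.exists_isWeightedFoelner hΩ β x
  let M (i : Finset G × ℕ) : ProbabilityMeasure X :=
    ⟨_, isProbabilityMeasure_orbitMeasure (fun g => Real.exp_pos (β * Ω g x)) (hF₀ i) x⟩
  obtain ⟨m, hm⟩ := exists_clusterPt_of_compactSpace (map M atTop)
  exact ⟨m, inferInstance, hΩ.conformalMeasureAdd_of_mapClusterPt hF (fun _ => rfl) hm⟩

end ConformalMeasure

section OrbitAverage

variable {G X : Type*}

/-- The average of `f` over the translates of a point by the elements of `F`. -/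
noncomputable def orbitAverage [VAdd G X] (F : Finset G) (f : X → ℝ) (x : X) : ℝ :=
  (∑ g ∈ F, f (g +ᵥ x)) / F.card

lemma integral_orbitMeasure_one [VAdd G X] [MeasurableSpace X] [MeasurableSingletonClass X]
    (F : Finset G) (x : X) (f : X → ℝ) :
    ∫ y, f y ∂orbitMeasure (fun _ => 1) F x = orbitAverage F f x := by
  simp [integral_orbitMeasure, orbitAverage]

variable [AddCommGroup G] [AddAction G X] [TopologicalSpace X] {Ω : G → X → ℝ}

lemma IsContinuousCocycle.orbitAverage_nsmul (hΩ : IsContinuousCocycle Ω) (F : Finset G) (g : G)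
    (k : ℕ) (x : X) :
    orbitAverage F (Ω (k • g)) x = ∑ j ∈ Finset.range k, orbitAverage F (Ω g) (j • g +ᵥ x) := by
  simp only [orbitAverage, hΩ.nsmul_apply g k, ← Finset.sum_div]
  rw [Finset.sum_comm]
  simp_rw [vadd_comm (_ : G) (_ • g) x]

lemma IsContinuousCocycle.abs_sub_orbitAverage_le (hΩ : IsContinuousCocycle Ω) {C : G → ℝ}
    (hC : ∀ h x, |Ω h x| ≤ C h) {F : Finset G} (hF : F.Nonempty) (g : G) (x : X) :
    |Ω g x - orbitAverage F (Ω g) x| ≤ (∑ h ∈ F, 2 * C h) / F.card := by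
  have hcard : (0 : ℝ) < F.card := by exact_mod_cast hF.card_pos
  have hsub : Ω g x - orbitAverage F (Ω g) x = (∑ h ∈ F, (Ω h x - Ω h (g +ᵥ x))) / F.card := by
    rw [orbitAverage, eq_div_iff hcard.ne', sub_mul, div_mul_cancel₀ _ hcard.ne', mul_comm,
      ← nsmul_eq_mul, ← Finset.sum_const, ← Finset.sum_sub_distrib]
    exact Finset.sum_congr rfl fun h _ => by rw [hΩ.apply_vadd g h x]; ring
  rw [hsub, abs_div, Nat.abs_cast]
  gcongr
  refine (Finset.abs_sum_le_sum_abs _ _).trans (Finset.sum_le_sum fun h _ => ?_)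
  exact (abs_sub _ _).trans (by linarith [hC h x, hC h (g +ᵥ x)])

end OrbitAverage

section UniquelyErgodic

/-- The measure `μ` is the only `G`-invariant probability measure on `X`. -/
structure IsUniquelyErgodic (G : Type*) {X : Type*} [VAdd G X] [MeasurableSpace X]
    (μ : Measure X) : Prop where
  isProbabilityMeasure : IsProbabilityMeasure μ
  map_vadd : ∀ g : G, μ.map (fun x => g +ᵥ x) = μ
  eq_of_map_vadd : ∀ ν : Measure X, IsProbabilityMeasure ν →
    (∀ g : G, ν.map (fun x => g +ᵥ x) = ν) → ν = μ

variable {G X : Type*} [TopologicalSpace X] [CompactSpace X] [T2Space X] [MeasurableSpace X]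
  [BorelSpace X] [HasOuterApproxClosed X] {μ : Measure X}

lemma IsUniquelyErgodic.tendstoUniformly_orbitAverage [AddGroup G] [AddAction G X]
    [ContinuousConstVAdd G X] [DecidableEq G] (hμ : IsUniquelyErgodic G μ) {ι : Type*}
    {l : Filter ι} {F : ι → Finset G} (hF₀ : ∀ i, (F i).Nonempty)
    (hF : IsWeightedFoelner l (fun _ _ => 1) F) (f : C(X, ℝ)) :
    TendstoUniformly (fun i => orbitAverage (F i) f) (fun _ => ∫ x, f x ∂μ) l := by
  have hprob := hμ.isProbabilityMeasure
  let M (q : ι × X) : ProbabilityMeasure X :=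
    ⟨_, isProbabilityMeasure_orbitMeasure (fun _ : G => zero_lt_one) (hF₀ q.1) q.2⟩
  have hM : Tendsto M (l ×ˢ ⊤) (𝓝 ⟨μ, hprob⟩) := by
    refine tendsto_nhds_of_unique_mapClusterPt fun m hm => Subtype.ext ?_
    refine hμ.eq_of_map_vadd m inferInstance (conformalMeasureAdd_zero_iff (Ω := 0).1 ?_)
    refine (IsContinuousCocycle.zero G X).conformalMeasureAdd_of_mapClusterPt
      (F := fun q : ι × X => F q.1) (p := Prod.snd) (fun h => ?_) (fun q => ?_) hm
    · simpa [Function.comp_def] using (hF h).comp tendsto_fst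
    · simp [M]
  have hint := ProbabilityMeasure.tendsto_iff_forall_integral_tendsto.1 hM (.mkOfCompact f)
  have havg (q : ι × X) : ∫ x, f x ∂(M q : Measure X) = orbitAverage (F q.1) f q.2 :=
    integral_orbitMeasure_one _ _ _
  rw [tendstoUniformly_iff_tendsto]
  simp only [← havg]
  exact (tendsto_const_nhds.prodMk_nhds hint).mono_right (nhds_le_uniformity _)

variable [AddCommGroup G] [AddAction G X] [ContinuousConstVAdd G X] {Ω : G → X → ℝ}

lemma IsUniquelyErgodic.exists_abs_orbitAverage_sub_le (hμ : IsUniquelyErgodic G μ) (f : C(X, ℝ))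
    {ε : ℝ} (hε : 0 < ε) : ∃ F : Finset G, F.Nonempty ∧
      ∀ x, |orbitAverage F f x - ∫ y, f y ∂μ| ≤ ε := by
  classical
  obtain hX | ⟨⟨x₀⟩⟩ := isEmpty_or_nonempty X
  · exact ⟨{0}, Finset.singleton_nonempty 0, fun x => hX.elim x⟩
  obtain ⟨F, hF₀, hF⟩ := (isSublinear_zero G X).exists_isWeightedFoelner
    (IsContinuousCocycle.zero G X) 0 x₀
  have hunif := hμ.tendstoUniformly_orbitAverage hF₀ (by simpa using hF) f
  obtain ⟨i, hi⟩ := (Metric.tendstoUniformly_iff.1 hunif ε hε).exists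
  exact ⟨F i, hF₀ i, fun x => by simpa [dist_comm, Real.dist_eq] using (hi x).le⟩

lemma IsContinuousCocycle.exists_abs_nsmul_sub_le (hΩ : IsContinuousCocycle Ω)
    (hμ : IsUniquelyErgodic G μ) (g : G) {ε : ℝ} (hε : 0 < ε) :
    ∃ C, ∀ (k : ℕ) x, |Ω (k • g) x - k * ∫ y, Ω g y ∂μ| ≤ ε * k + C := by
  obtain ⟨F, hF₀, hF⟩ := hμ.exists_abs_orbitAverage_sub_le ⟨Ω g, hΩ.continuous g⟩ hε
  choose C hC using hΩ.exists_abs_le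
  refine ⟨(∑ h ∈ F, 2 * C h) / F.card, fun k x => ?_⟩
  have hsum : |orbitAverage F (Ω (k • g)) x - k * ∫ y, Ω g y ∂μ| ≤ ε * k := by
    calc |orbitAverage F (Ω (k • g)) x - k * ∫ y, Ω g y ∂μ|
        = |∑ j ∈ Finset.range k, (orbitAverage F (Ω g) (j • g +ᵥ x) - ∫ y, Ω g y ∂μ)| := by
          simp [hΩ.orbitAverage_nsmul, Finset.sum_sub_distrib]
      _ ≤ ∑ _j ∈ Finset.range k, ε :=
          (Finset.abs_sum_le_sum_abs _ _).trans (Finset.sum_le_sum fun _ _ => hF _)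
      _ = ε * k := by simp [mul_comm]
  calc |Ω (k • g) x - k * ∫ y, Ω g y ∂μ|
      ≤ |Ω (k • g) x - orbitAverage F (Ω (k • g)) x| +
          |orbitAverage F (Ω (k • g)) x - k * ∫ y, Ω g y ∂μ| := abs_sub_le _ _ _
    _ ≤ ε * k + (∑ h ∈ F, 2 * C h) / F.card := by
        linarith [hΩ.abs_sub_orbitAverage_le hC hF₀ (k • g) x]

lemma IsContinuousCocycle.isSublinear_of_integral_eq_zero (hΩ : IsContinuousCocycle Ω)
    (hμ : IsUniquelyErgodic G μ) (h : ∀ g, ∫ x, Ω g x ∂μ = 0) : IsSublinear Ω := fun g ε hε => by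
  simpa [h g] using hΩ.exists_abs_nsmul_sub_le hμ g hε

end UniquelyErgodic

section KMSSpectrum

variable {G X : Type*} [TopologicalSpace X] [MeasurableSpace X] [BorelSpace X]

/-- The KMS spectrum of the cocycle `Ω`: the inverse temperatures `β` that admit an
`e^{β·Ω}`-conformal probability measure. -/
def kmsSpectrum [AddGroup G] [AddAction G X] (Ω : G → X → ℝ) : Set ℝ :=
  {β | ∃ m : Measure X, IsProbabilityMeasure m ∧ ConformalMeasureAdd Ω β m}

lemma IsUniquelyErgodic.zero_mem_kmsSpectrum [HasOuterApproxClosed X] [AddGroup G]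
    [AddAction G X] [ContinuousConstVAdd G X] {Ω : G → X → ℝ} {μ : Measure X}
    (hμ : IsUniquelyErgodic G μ) : 0 ∈ kmsSpectrum Ω :=
  have := hμ.isProbabilityMeasure
  ⟨μ, this, conformalMeasureAdd_zero_iff.2 hμ.map_vadd⟩

lemma ConformalMeasureAdd.exists_nonpos_and_exists_nonneg [CompactSpace X] [AddGroup G]
    [AddAction G X] {Ω : G → X → ℝ} {β : ℝ} {m : Measure X} [IsProbabilityMeasure m]
    (hm : ConformalMeasureAdd Ω β m) (hβ : β ≠ 0) {g : G} (hg : Continuous (Ω g)) :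
    (∃ x, Ω g x ≤ 0) ∧ ∃ x, 0 ≤ Ω g x := by
  have hcont : Continuous fun x => Real.exp (β * Ω g x) := by fun_prop
  have hint : Integrable (fun x => Real.exp (β * Ω g x)) m :=
    hcont.integrable_of_hasCompactSupport (.of_compactSpace _)
  have hone : ∫ x, Real.exp (β * Ω g x) ∂m = 1 := by simpa using hm g 1
  obtain ⟨x, hx⟩ := exists_le_integral hint
  obtain ⟨y, hy⟩ := exists_integral_le hint
  rw [hone, Real.exp_le_one_iff] at hx
  rw [hone, Real.one_le_exp_iff] at hy
  obtain hβ | hβ := hβ.lt_or_gt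
  · exact ⟨⟨y, nonpos_of_mul_nonneg_right hy hβ⟩, x, nonneg_of_mul_nonpos_right hx hβ⟩
  · exact ⟨⟨x, nonpos_of_mul_nonpos_right hx hβ⟩, y, nonneg_of_mul_nonneg_right hy hβ⟩

variable [CompactSpace X] [T2Space X] [HasOuterApproxClosed X] [AddCommGroup G] [AddAction G X]
  [ContinuousConstVAdd G X] {Ω : G → X → ℝ} {μ : Measure X}

lemma IsContinuousCocycle.integral_eq_zero_of_mem_kmsSpectrum (hΩ : IsContinuousCocycle Ω)
    (hμ : IsUniquelyErgodic G μ) {β : ℝ} (hβ : β ∈ kmsSpectrum Ω) (hβ₀ : β ≠ 0) (g : G) :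
    ∫ x, Ω g x ∂μ = 0 := by
  obtain ⟨m, _, hm⟩ := hβ
  by_contra hc
  have hc := abs_pos.2 hc
  obtain ⟨C, hC⟩ := hΩ.exists_abs_nsmul_sub_le hμ g (half_pos hc)
  have hlin (k : ℕ) : |∫ x, Ω g x ∂μ| / 2 * k ≤ C := by
    obtain ⟨⟨x, hx⟩, y, hy⟩ := hm.exists_nonpos_and_exists_nonneg hβ₀ (hΩ.continuous (k • g))
    have hk : k * |∫ x, Ω g x ∂μ| ≤ |∫ x, Ω g x ∂μ| / 2 * k + C := by
      rw [← Nat.abs_cast, ← abs_mul, Nat.abs_cast, abs_le]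
      constructor
      · linarith [(abs_le.1 (hC k y)).2]
      · linarith [(abs_le.1 (hC k x)).1]
    linarith
  obtain ⟨k, hk⟩ := exists_nat_gt (C / (|∫ x, Ω g x ∂μ| / 2))
  rw [div_lt_iff₀' (half_pos hc)] at hk
  exact hk.not_ge (hlin k)

theorem kms_spectrum_uniquely_ergodic_general (hΩ : IsContinuousCocycle Ω)
    (hμ : IsUniquelyErgodic G μ) :
    ((∀ g, ∫ x, Ω g x ∂μ = 0) → kmsSpectrum Ω = Set.univ) ∧
      ((∃ g, ∫ x, Ω g x ∂μ ≠ 0) → kmsSpectrum Ω = {0}) := by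
  have := hμ.isProbabilityMeasure
  have := nonempty_of_isProbabilityMeasure μ
  refine ⟨fun hzero => Set.eq_univ_of_forall fun β => ?_, fun ⟨g, hg⟩ => ?_⟩
  · exact (hΩ.isSublinear_of_integral_eq_zero hμ hzero).exists_conformalMeasureAdd hΩ β
  · refine Set.eq_singleton_iff_unique_mem.2 ⟨hμ.zero_mem_kmsSpectrum, fun β hβ => ?_⟩
    by_contra hβ₀
    exact hg (hΩ.integral_eq_zero_of_mem_kmsSpectrum hμ hβ hβ₀ g)

end KMSSpectrum

/-- For a uniquely ergodic `ℤⁿ`-action with unique invariant measure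
`μ`, the KMS spectrum is `ℝ` when `Ω_μ = 0` and `{0}` when `Ω_μ ≠ 0`. -/
theorem kms_spectrum_uniquely_ergodic
    {n : ℕ} {X : Type*} [TopologicalSpace X] [CompactSpace X]
    [TopologicalSpace.MetrizableSpace X] [MeasurableSpace X] [BorelSpace X]
    [AddAction (Fin n → ℤ) X] [ContinuousConstVAdd (Fin n → ℤ) X]
    (Ω : (Fin n → ℤ) → X → ℝ) (hΩcont : ∀ g, Continuous (Ω g))
    (hΩ : ∀ (g h : Fin n → ℤ) (x : X), Ω g (h +ᵥ x) + Ω h x = Ω (g + h) x)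
    (μ : Measure X) [IsProbabilityMeasure μ]
    (hμinv : ∀ g : Fin n → ℤ, Measure.map (fun x => g +ᵥ x) μ = μ)
    (hμuniq : ∀ ν : Measure X, IsProbabilityMeasure ν →
      (∀ g : Fin n → ℤ, Measure.map (fun x => g +ᵥ x) ν = ν) → ν = μ) :
    ((∀ g : Fin n → ℤ, ∫ x, Ω g x ∂μ = 0) →
      {β : ℝ | ∃ m : Measure X, IsProbabilityMeasure m ∧ ConformalMeasureAdd Ω β m}
        = Set.univ) ∧
    ((∃ g : Fin n → ℤ, ∫ x, Ω g x ∂μ ≠ 0) →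
      {β : ℝ | ∃ m : Measure X, IsProbabilityMeasure m ∧ ConformalMeasureAdd Ω β m}
        = {0}) :=
  kms_spectrum_uniquely_ergodic_general ⟨hΩcont, hΩ⟩ ⟨inferInstance, hμinv, hμuniq⟩
end
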